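/- For every 1 ≤ r ≤ n−1, the group O_{n,r} has trivial centre; in particular O_n = O_{n,n−1} is centreless. -/

import Mathlib

/-!
An element of `O_n` acts on the tail equivalence classes of one-sided sequences (two sequences
are tail equivalent if they agree after deleting prefixes): all of its states induce the same
injective map there (`hmap_tail`, `tail_injective`), and products act as composites
(`tail_commute`).

The elements tested against a central `T` are swaps. If the words `w₁` and `w₂` do not overlap
themselves or each other, replacing every occurrence of one of them by the other is an involution
`sw w₁ w₂` of the sequences, induced by a state of an element of `O_n` (`exists_swap`). That state
is surjective, so the signature of the swap is `1` (`sigT_eq_one`) and the swap lies in every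
`O_{n,r}`.

Let `γ = 0^M Y` with `Y = 1 0 1 W 1` and `M` at least the length of `Y`. This word is unbordered,
hence suitable for a swap with a word `a^L b^L`. The map induced by `T` sends the class of
the periodic sequence `γ γ γ …` to the class of some `δ δ δ …` with `δ` unbordered
(`exists_unb`, a minimal rotation). If the two classes differed, one of the words `γ`, `δ` would
not occur in the other sequence, and the swap of this word with a suitable `a^L b^L` would move
one of the classes and fix the other, although it commutes with `T` (`test_fixed`).
So `T` fixes the class of every `γ γ γ …`.

Let `q` be the state of `T` with a loop labelled `0`, with output `u`. Then `h_q` sends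
`Y 0^M Y 0^M …` to `V u^(M-k) V u^(M-k) …`, with `V` independent of `M`. As this is tail
equivalent to `γ γ γ …` for all large `M`, the word `u` consists of zeros and `V` is `Y` up to
zeros at both ends (`locate`). Therefore `h_q (Y 0 0 0 …) = 0^e Y 0 0 0 …` for some `e` depending
on `Y`. By continuity and injectivity of `h_q`, `e` is constant for all `Y` starting with some
word `ν`, so that `h_q (ν x) = 0^e ν x` for all `x`, by density. As there is no incomplete
response, the state reached from `q` by reading `ν` induces the identity, and then so do all
states (`trivial_of_shifts`).
-/

/-!
Common definitions: transducers over a finite alphabet, strong synchronization,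
cores, ω-equivalence, minimal representatives, the monoids `M_n`, `SL_n`, `SO_n`,
the groups `O_n`, `L_n`, annotations, and the two-sided full shift.

Throughout, the alphabet is `Fin (n + 2)`, i.e. an alphabet of size `n + 2 ≥ 2`.
-/

namespace ShiftPaper

/-- The alphabet with `n + 2` letters. -/
abbrev A (n : ℕ) : Type := Fin (n + 2)

/-- Finite words over the alphabet. -/
abbrev Word (n : ℕ) : Type := List (A n)

/-- A transducer over the alphabet `A n`: a finite nonempty set of states together with a
transition function `tr` and an output function `out` (possibly asynchronous). -/
structure Transducer (n : ℕ) where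
  Q : Type
  fin : Finite Q
  ne : Nonempty Q
  tr : A n → Q → Q
  out : A n → Q → Word n

variable {n : ℕ}

instance (T : Transducer n) : Finite T.Q := T.fin
instance (T : Transducer n) : Nonempty T.Q := T.ne

/-- Extended transition function, reading a finite word from left to right. -/
def dsts (T : Transducer n) : Word n → T.Q → T.Q
  | [], q => q
  | a :: w, q => dsts T w (T.tr a q)

/-- Extended output function along a finite word. -/
def outs (T : Transducer n) : Word n → T.Q → Word n
  | [], _ => []
  | a :: w, q => T.out a q ++ outs T w (T.tr a q)

/-- Every (nonempty) circuit in the transducer has nonempty output. -/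
def CircuitsNonempty (T : Transducer n) : Prop :=
  ∀ (q : T.Q) (w : Word n), w ≠ [] → dsts T w q = q → outs T w q ≠ []

/-- `T` is synchronizing at level `k`: the state reached after reading any word of
length `k` does not depend on the starting state. -/
def SyncAt (T : Transducer n) (k : ℕ) : Prop :=
  ∀ w : Word n, w.length = k → ∀ p q : T.Q, dsts T w p = dsts T w q

/-- `T` is strongly synchronizing: synchronizing at some level. -/
def StronglySync (T : Transducer n) : Prop := ∃ k, SyncAt T k

/-- The minimal synchronizing level (junk value `0` if `T` is not strongly synchronizing). -/
noncomputable def syncLevel (T : Transducer n) : ℕ := by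
  classical
  exact if h : StronglySync T then Nat.find h else 0

/-- The infinite output stream produced from state `q` on reading the infinite input `x`
(the map `h_q`).  (Well defined on transducers all of whose circuits have nonempty
output; junk values otherwise.) -/
noncomputable def hmap (T : Transducer n) (q : T.Q) (x : ℕ → A n) : ℕ → A n := fun m => by
  classical
  exact if h : ∃ k, m < (outs T ((List.range k).map x) q).length then
    (outs T ((List.range h.choose).map x) q).getD m default
  else default

/-- ω-equality of transducers: a bijection of the state sets under which corresponding
states induce the same maps on infinite sequences. -/
def OmegaEq (T U : Transducer n) : Prop :=
  ∃ f : T.Q ≃ U.Q, ∀ q, hmap T q = hmap U (f q)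

/-- The setoid on states given by ω-equivalence of states. -/
def omegaSetoid (T : Transducer n) : Setoid T.Q :=
  ⟨fun p q => hmap T p = hmap T q, ⟨fun _ => rfl, fun h => h.symm, fun h h' => h.trans h'⟩⟩

/-- The transducer obtained by identifying ω-equivalent states. -/
noncomputable def quotT (T : Transducer n) : Transducer n where
  Q := Quotient (omegaSetoid T)
  fin := Finite.of_surjective (Quotient.mk (omegaSetoid T))
    fun c => ⟨Quotient.out c, Quotient.out_eq c⟩
  ne := ⟨Quotient.mk (omegaSetoid T) (Classical.choice T.ne)⟩
  tr := fun a c => Quotient.mk (omegaSetoid T) (T.tr a (Quotient.out c))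
  out := fun a c => T.out a (Quotient.out c)

/-- `q` is a state of the core of `T`: it is forced by some word whose length is a
synchronizing level of `T`. -/
def CoreState (T : Transducer n) (q : T.Q) : Prop :=
  ∃ (k : ℕ) (w : Word n), SyncAt T k ∧ w.length = k ∧ ∀ p, dsts T w p = q

/-- `T` is core: it equals its core. -/
def IsCore (T : Transducer n) : Prop := ∀ q : T.Q, CoreState T q

/-- Auxiliary predicate used to make the core construction total. -/
def CoreStateE (T : Transducer n) (q : T.Q) : Prop :=
  CoreState T q ∨ ∀ p, ¬ CoreState T p

/-- The core of `T` (as a transducer). -/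
noncomputable def coreT (T : Transducer n) : Transducer n where
  Q := {q : T.Q // CoreStateE T q}
  fin := Subtype.finite
  ne := by
    classical
    by_cases h : ∀ p, ¬ CoreState T p
    · exact ⟨⟨Classical.choice T.ne, Or.inr h⟩⟩
    · push_neg at h
      obtain ⟨p, hp⟩ := h
      exact ⟨⟨p, Or.inl hp⟩⟩
  tr := fun a q => by
    classical
    exact if h : CoreStateE T (T.tr a q.1) then ⟨T.tr a q.1, h⟩ else q
  out := fun a q => T.out a q.1

/-- There exist two inputs whose outputs from `q` disagree at position `j`. -/
def Disagree (T : Transducer n) (q : T.Q) (j : ℕ) : Prop :=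
  ∃ x y : ℕ → A n, hmap T q x j ≠ hmap T q y j

/-- The extent of incomplete response of `q` (the length of `Λ(ε,q)`) is finite. -/
def FiniteExtent (T : Transducer n) (q : T.Q) : Prop := ∃ j, Disagree T q j

/-- The extent of incomplete response `|Λ(ε,q)|` of the state `q`
(junk value `0` when it is infinite). -/
noncomputable def extentLen (T : Transducer n) (q : T.Q) : ℕ := by
  classical
  exact if h : FiniteExtent T q then Nat.find h else 0

/-- The word `Λ(ε,q)`: the greatest common prefix of all outputs from `q`. -/
noncomputable def extentWord (T : Transducer n) (q : T.Q) : Word n :=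
  (List.range (extentLen T q)).map (hmap T q fun _ => default)

/-- `T` has no states of incomplete response (`Λ(ε,q) = ε` for every state `q`). -/
def NoIncomplete (T : Transducer n) : Prop := ∀ q : T.Q, Disagree T q 0

/-- No two distinct states of `T` are ω-equivalent. -/
def WeaklyMinimal (T : Transducer n) : Prop :=
  ∀ p q : T.Q, hmap T p = hmap T q → p = q

/-- The Lipschitz condition (SL3): around any circuit the output is as long as the input. -/
def SL3 (T : Transducer n) : Prop :=
  ∀ (q : T.Q) (Γ : Word n), dsts T Γ q = q → (outs T Γ q).length = Γ.length

/-- `T` is synchronous: it writes exactly one letter for each letter read. -/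
def Synchronous (T : Transducer n) : Prop :=
  ∀ (a : A n) (q : T.Q), (T.out a q).length = 1

/-- Boolean lexicographic comparison of words. -/
def lexLtB : Word n → Word n → Bool
  | [], [] => false
  | [], _ :: _ => true
  | _ :: _, [] => false
  | a :: u, b :: v => if a < b then true else if b < a then false else lexLtB u v

/-- The lexicographically least rotation of a word. -/
def minimalRot (w : Word n) : Word n :=
  ((List.range w.length).map fun i => w.rotate i).foldl
    (fun acc r => if lexLtB r acc then r else acc) w

/-- A nonempty word is prime if it is not a power of a strictly shorter word. -/
def IsPrime (w : Word n) : Prop :=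
  w ≠ [] ∧ ∀ (u : Word n) (k : ℕ), w = (List.replicate k u).flatten → w.length ≤ u.length

/-- `v` is a rotation of `u`. -/
def RotEq (u v : Word n) : Prop := ∃ i : ℕ, v = u.rotate i

/-- The prime word of which the (eventually constant single) image point of `T` is a power
(used for the degenerate transducers `Z_x`; junk values otherwise). -/
noncomputable def periodicRoot (T : Transducer n) : Word n := by
  classical
  exact
    if hp : ∃ m, 0 < m ∧ ∀ j, hmap T (Classical.choice T.ne) (fun _ => default) (j + m) =
        hmap T (Classical.choice T.ne) (fun _ => default) j
    then (List.range (Nat.find hp)).map (hmap T (Classical.choice T.ne) fun _ => default)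
    else [default]

/-- Remove the incomplete response from the states of `T`: replace the output `λ(a,q)` by
`Λ(a,q) - Λ(ε,q)`.  (In the degenerate case where the extents of incomplete response are
infinite, all outputs are replaced by the minimal rotation of the prime root of the unique
image point, so that minimising produces the transducer `Z_x` of the paper.) -/
noncomputable def removeIncomplete (T : Transducer n) : Transducer n where
  Q := T.Q
  fin := T.fin
  ne := T.ne
  tr := T.tr
  out := fun a q => by
    classical
    exact if ∀ p : T.Q, FiniteExtent T p then
      (T.out a q ++ extentWord T (T.tr a q)).drop (extentLen T q)
    else minimalRot (periodicRoot T)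

/-- The minimal representative `[T]` of a strongly synchronizing core transducer `T`:
remove incomplete response, take the core, and identify ω-equivalent states. -/
noncomputable def minRep (T : Transducer n) : Transducer n :=
  quotT (coreT (removeIncomplete T))

/-- The single state transducer `Z_x` which outputs `x` on every input letter. -/
def Zword (x : Word n) : Transducer n where
  Q := PUnit
  fin := inferInstance
  ne := ⟨PUnit.unit⟩
  tr := fun _ q => q
  out := fun _ _ => x

/-- The single state identity transducer. -/
def oneT : Transducer n where
  Q := PUnit
  fin := inferInstance
  ne := ⟨PUnit.unit⟩
  tr := fun _ q => q
  out := fun a _ => [a]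

/-- The product transducer `T * U`: the outputs of `T` are processed by `U`. -/
noncomputable def prodT (T U : Transducer n) : Transducer n where
  Q := T.Q × U.Q
  fin := inferInstance
  ne := ⟨⟨Classical.choice T.ne, Classical.choice U.ne⟩⟩
  tr := fun a p => (T.tr a p.1, dsts U (T.out a p.1) p.2)
  out := fun a p => outs U (T.out a p.1) p.2

/-- The product in `M_n`: the minimal representative of the core of `T * U`. -/
noncomputable def mulT (T U : Transducer n) : Transducer n :=
  minRep (coreT (prodT T U))

/-- Membership in the monoid `M_n` of minimal, strongly synchronizing, core transducers
(a transducer is minimal if it is core, has no states of incomplete response and no two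
distinct ω-equivalent states, or it is one of the degenerate transducers `Z_x` for a prime
word `x` which is least in its rotation class). -/
def MnMem (T : Transducer n) : Prop :=
  CircuitsNonempty T ∧ StronglySync T ∧ IsCore T ∧
    ((NoIncomplete T ∧ WeaklyMinimal T) ∨
      ∃ x : Word n, IsPrime x ∧ minimalRot x = x ∧ OmegaEq T (Zword x))

/-- Membership in the monoid `SL_n`: elements of `M_n` satisfying the Lipschitz condition. -/
def SLnMem (T : Transducer n) : Prop := MnMem T ∧ SL3 T

/-- Membership in the monoid `SO_n`: elements of `M_n` all of whose states induce injective
maps with clopen image. -/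
def SOnMem (T : Transducer n) : Prop :=
  MnMem T ∧ ∀ q : T.Q, Function.Injective (hmap T q) ∧ IsClopen (Set.range (hmap T q))

/-- Membership in the group `O_n`: invertible elements of `SO_n` (with inverse in `SO_n`);
equality in `M_n` is ω-equality. -/
def OnMem (T : Transducer n) : Prop :=
  SOnMem T ∧ ∃ U : Transducer n, SOnMem U ∧ OmegaEq (mulT T U) oneT ∧ OmegaEq (mulT U T) oneT

/-- Membership in the group `L_n = O_n ∩ SL_n`. -/
def LnMem (T : Transducer n) : Prop := OnMem T ∧ SL3 T

/-- Membership in the monoid `\widetilde{P}_n` of weakly minimal, synchronous, strongly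
synchronizing core transducers. -/
def PtildeMem (T : Transducer n) : Prop :=
  CircuitsNonempty T ∧ StronglySync T ∧ IsCore T ∧ Synchronous T ∧ WeaklyMinimal T

/-- The product in `\widetilde{P}_n`: take the product transducer, identify ω-equivalent
states and take the core. -/
noncomputable def ptildeMul (P R : Transducer n) : Transducer n :=
  coreT (quotT (prodT P R))

/-- An annotation of (a strongly synchronizing core transducer satisfying the Lipschitz
condition) `T`. -/
def Annotation (T : Transducer n) (α : T.Q → ℤ) : Prop :=
  ∀ (q : T.Q) (Γ : Word n),
    α (dsts T Γ q) = α q + ((outs T Γ q).length : ℤ) - (Γ.length : ℤ)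

/-! ### The two-sided full shift -/

/-- The space of bi-infinite sequences over the alphabet `A n`. -/
abbrev FullShift (n : ℕ) : Type := ℤ → A n

/-- The `i`-th power of the shift map: `(shiftZ i x) j = x (j - i)`.
The shift `σ` itself is `shiftZ 1`. -/
def shiftZ (i : ℤ) (x : FullShift n) : FullShift n := fun j => x (j - i)

/-- The monoid of endomorphisms of the shift dynamical system: continuous maps on the
space of bi-infinite sequences commuting with the shift. -/
def EndShift (n : ℕ) : Type :=
  {f : FullShift n → FullShift n // Continuous f ∧ ∀ x, f (shiftZ 1 x) = shiftZ 1 (f x)}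

/-- The group of automorphisms of the shift dynamical system: homeomorphisms of the
space of bi-infinite sequences commuting with the shift. -/
def AutShift (n : ℕ) : Type :=
  {f : FullShift n → FullShift n // Continuous f ∧ (∀ x, f (shiftZ 1 x) = shiftZ 1 (f x)) ∧
    ∃ g : FullShift n → FullShift n, Continuous g ∧ (∀ x, g (f x) = x) ∧ ∀ x, f (g x) = x}

/-- The window `x_{i-k} … x_{i-1}` of a bi-infinite sequence. -/
def window (x : FullShift n) (i : ℤ) (k : ℕ) : Word n :=
  (List.range k).map fun j => x (i - (k : ℤ) + (j : ℤ))

/-- The state of `L` forced by the window `x_{i-k} … x_{i-1}`. -/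
noncomputable def forced (L : Transducer n) (k : ℕ) (x : FullShift n) (i : ℤ) : L.Q :=
  dsts L (window x i k) (Classical.choice L.ne)

/-- The output word written while processing the letter `x i`. -/
noncomputable def outAt (L : Transducer n) (k : ℕ) (x : FullShift n) (i : ℤ) : Word n :=
  L.out (x i) (forced L k x i)

/-- The defining specification of the map `(L, α) : X_n^ℤ → X_n^ℤ` induced by an annotated
transducer: for each index `i`, with `q` the state forced by `x_{i-k} … x_{i-1}` and
`w = λ(x_i, q)`, the word `w` occupies the coordinates `i + α q, …, i + α q + |w| - 1`
of the image sequence `y`. -/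
def SpecAt (L : Transducer n) (α : L.Q → ℤ) (k : ℕ) (x y : FullShift n) : Prop :=
  ∀ (i : ℤ) (j : ℕ), j < (outAt L k x i).length →
    y (i + α (forced L k x i) + (j : ℤ)) = (outAt L k x i).getD j default

/-- The map `(L, α) : X_n^ℤ → X_n^ℤ` induced by an annotated transducer. -/
noncomputable def inducedMap (L : Transducer n) (α : L.Q → ℤ) (k : ℕ) :
    FullShift n → FullShift n := fun x m => by
  classical
  exact if h : ∃ p : ℤ × ℕ, p.2 < (outAt L k x p.1).length ∧
      p.1 + α (forced L k x p.1) + (p.2 : ℤ) = m then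
    (outAt L k x h.choose.1).getD h.choose.2 default
  else default

/-- The map `κ` from the states of `T` to the states of its minimal representative. -/
noncomputable def kappa (T : Transducer n) (q : T.Q) : (minRep T).Q := by
  classical
  exact Quotient.mk (omegaSetoid (coreT (removeIncomplete T)))
    (if h : CoreStateE (removeIncomplete T) q then
      (⟨q, h⟩ : (coreT (removeIncomplete T)).Q)
    else Classical.choice (coreT (removeIncomplete T)).ne)

/-- The annotation `\overline{α + β}` of the product `LM` in `SL_n`: its value at the
state `κ (s, t)` is `α s + β t + |Λ(ε, (s,t))|`, the extent of incomplete response being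
computed in `core (L * M)`. -/
noncomputable def annProd (L M : Transducer n) (α : L.Q → ℤ) (β : M.Q → ℤ) :
    (mulT L M).Q → ℤ := fun c =>
  α (Quotient.out c).1.1.1 + β (Quotient.out c).1.1.2 +
    (extentLen (coreT (prodT L M)) (Quotient.out c).1 : ℤ)

/-- The set `ASL_n` of annotated transducers: pairs of a transducer and an integer-valued
function on its states. -/
def ASLPair (n : ℕ) := Σ T : Transducer n, T.Q → ℤ

/-- Membership in `ASL_n`: either the transducer is in `SL_n` with no states of incomplete
response and the function is an annotation of it, or it is a degenerate `Z_a` for a letter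
`a` (whose `annotation ∞` we model by allowing an arbitrary function). -/
def ASLMem (p : ASLPair n) : Prop :=
  (SLnMem p.1 ∧ NoIncomplete p.1 ∧ Annotation p.1 p.2) ∨ ∃ a : A n, OmegaEq p.1 (Zword [a])

/-- Equality in `ASL_n`: ω-equality of the transducers matching up the annotations, with
the two elements possibly both being the degenerate `(Z_a, ∞)` for the same letter `a`. -/
def ASLEq (p q : ASLPair n) : Prop :=
  (∃ f : p.1.Q ≃ q.1.Q, (∀ s, hmap p.1 s = hmap q.1 (f s)) ∧ ∀ s, q.2 (f s) = p.2 s) ∨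
    ∃ a : A n, OmegaEq p.1 (Zword [a]) ∧ OmegaEq q.1 (Zword [a])

/-- The product on `ASL_n`: `(L, α)(M, β) = (LM, \overline{α + β})`. -/
noncomputable def ASLmul (p q : ASLPair n) : ASLPair n :=
  ⟨mulT p.1 q.1, annProd p.1 q.1 p.2 q.2⟩

/-- The identity `(1, 0)` of `ASL_n`. -/
def ASLone : ASLPair n := ⟨oneT, fun _ => 0⟩

/-- Membership in `AL_n`: annotated elements of `L_n`. -/
def ALMem (p : ASLPair n) : Prop := LnMem p.1 ∧ Annotation p.1 p.2

/-- The element `([P], α)` of `ASL_n` with `α ((q) κ) = i + |Λ(ε, q)|`, associated to the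
endomorphism `σ^i ∘ f_P`. -/
noncomputable def phiPair (P : Transducer n) (i : ℤ) : ASLPair n :=
  ⟨minRep P, fun c => i + (extentLen P (Quotient.out c).1 : ℤ)⟩

/-- The unique state at the base of a circuit labelled `Γ` (junk value if there is none). -/
noncomputable def qcirc (T : Transducer n) (Γ : Word n) : T.Q := by
  classical
  exact if h : ∃ q, dsts T Γ q = q then h.choose else Classical.choice T.ne

/-- The prime root of a word: the prime word of which `w` is a power
(junk value `w` if there is none). -/
noncomputable def primeRoot (w : Word n) : Word n := by
  classical
  exact if h : ∃ u : Word n, IsPrime u ∧ ∃ k, w = (List.replicate k u).flatten then h.choose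
  else w

/-- The action of `T ∈ M_n` on (rotation classes of) prime words: `Γ` is sent to the prime
word of which `λ(Γ, q_Γ)` is a power, where `q_Γ` is the unique state with a circuit
labelled `Γ` based at it. -/
noncomputable def PiAct (T : Transducer n) (Γ : Word n) : Word n :=
  primeRoot (outs T Γ (qcirc T Γ))

/-- The cylinder set of one-sided infinite sequences with prefix `ν`. -/
def Cyl (ν : Word n) : Set (ℕ → A n) :=
  {x | ∀ (j : ℕ) (h : j < ν.length), x j = ν.get ⟨j, h⟩}

/-- `m_q = |B(q)|`: the least cardinality of a finite set of words whose cylinders are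
contained in, and together cover, the image of `h_q`. -/
noncomputable def mq (T : Transducer n) (q : T.Q) : ℕ :=
  sInf {m : ℕ | ∃ S : Finset (Word n), S.card = m ∧
    (∀ ν ∈ S, Cyl ν ⊆ Set.range (hmap T q)) ∧
    (⋃ ν ∈ S, Cyl ν) = Set.range (hmap T q)}

/-- The signature homomorphism `sig : O_n → (ℤ/(n-1))^×`, as an element of `ℤ/(n-1)`
(for our alphabet of size `n + 2`, the modulus is `n + 1`). -/
noncomputable def sigT (T : Transducer n) : ZMod (n + 1) :=
  (mq T (Classical.choice T.ne) : ZMod (n + 1))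

/-! ### Infinite sequences -/

/-- One-sided infinite sequences over the alphabet. -/
abbrev Seq (n : ℕ) : Type := ℕ → A n

/-- The sequence `a x₀ x₁ …`. -/
def scons (a : A n) (x : Seq n) : Seq n
  | 0 => a
  | m + 1 => x m

/-- The sequence `w x` obtained by writing the finite word `w` in front of `x`. -/
def pre : Word n → Seq n → Seq n
  | [], x => x
  | a :: w, x => scons a (pre w x)

/-- The `k`-fold shift of a sequence. -/
def sdrop (k : ℕ) (x : Seq n) : Seq n := fun t => x (k + t)

/-- The prefix of length `k` of a sequence. -/
def stake (k : ℕ) (x : Seq n) : Word n := (List.range k).map x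

@[simp] lemma scons_zero (a : A n) (x : Seq n) : scons a x 0 = a := rfl
@[simp] lemma scons_succ (a : A n) (x : Seq n) (m : ℕ) : scons a x (m + 1) = x m := rfl
@[simp] lemma pre_nil (x : Seq n) : pre [] x = x := rfl
@[simp] lemma pre_cons (a : A n) (w : Word n) (x : Seq n) :
    pre (a :: w) x = scons a (pre w x) := rfl

lemma scons_eta (x : Seq n) : scons (x 0) (sdrop 1 x) = x := by
  funext m
  cases m with
  | zero => rfl
  | succ m => simp [sdrop, add_comm]

lemma exists_scons (x : Seq n) : ∃ a y, x = scons a y := ⟨_, _, (scons_eta x).symm⟩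

lemma scons_inj {a b : A n} {x y : Seq n} (h : scons a x = scons b y) : a = b ∧ x = y :=
  ⟨congrFun h 0, funext fun m => congrFun h (m + 1)⟩

@[simp] lemma sdrop_scons (a : A n) (x : Seq n) : sdrop 1 (scons a x) = x := by
  funext m; simp [sdrop, add_comm 1 m]

@[simp] lemma sdrop_zero (x : Seq n) : sdrop 0 x = x := by
  funext m; simp [sdrop]

lemma sdrop_sdrop (j k : ℕ) (x : Seq n) : sdrop j (sdrop k x) = sdrop (k + j) x := by
  funext m; simp [sdrop, add_assoc]

lemma pre_append (u v : Word n) (x : Seq n) : pre (u ++ v) x = pre u (pre v x) := by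
  induction u with
  | nil => rfl
  | cons a u ih => simp [ih]

lemma pre_lt (w : Word n) (x : Seq n) {m : ℕ} (h : m < w.length) :
    pre w x m = w.getD m default := by
  induction w generalizing m with
  | nil => simp at h
  | cons a w ih =>
    cases m with
    | zero => simp
    | succ m => simpa using ih (by simpa using h)

lemma pre_add (w : Word n) (x : Seq n) (m : ℕ) : pre w x (w.length + m) = x m := by
  induction w with
  | nil => simp
  | cons a w ih =>
    have : (a :: w).length + m = (w.length + m) + 1 := by simp; omega
    rw [this]; simpa using ih

lemma pre_ge (w : Word n) (x : Seq n) {m : ℕ} (h : w.length ≤ m) :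
    pre w x m = x (m - w.length) := by
  obtain ⟨k, rfl⟩ := Nat.exists_eq_add_of_le h
  rw [pre_add]; simp

@[simp] lemma sdrop_pre (w : Word n) (x : Seq n) : sdrop w.length (pre w x) = x :=
  funext fun m => pre_add w x m

lemma pre_inj {w : Word n} {x y : Seq n} (h : pre w x = pre w y) : x = y := by
  rw [← sdrop_pre w x, h, sdrop_pre]

lemma pre_injective (w : Word n) : Function.Injective (pre w) := fun _ _ h => pre_inj h

@[simp] lemma stake_length (k : ℕ) (x : Seq n) : (stake k x).length = k := by simp [stake]

@[simp] lemma stake_zero (x : Seq n) : stake 0 x = [] := rfl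

lemma stake_succ (k : ℕ) (x : Seq n) : stake (k + 1) x = x 0 :: stake k (sdrop 1 x) := by
  simp only [stake, List.range_succ_eq_map, List.map_cons, List.map_map]
  congr 1
  apply List.map_congr_left
  intro m _
  simp [sdrop, add_comm]

@[simp] lemma stake_succ_scons (k : ℕ) (a : A n) (x : Seq n) :
    stake (k + 1) (scons a x) = a :: stake k x := by
  rw [stake_succ]; simp

lemma stake_getD (k : ℕ) (x : Seq n) {m : ℕ} (h : m < k) : (stake k x).getD m default = x m := by
  simp [stake, List.getD, h]

@[simp] lemma pre_stake (k : ℕ) (x : Seq n) : pre (stake k x) (sdrop k x) = x := by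
  funext m
  rcases lt_or_ge m k with h | h
  · rw [pre_lt _ _ (by simpa using h), stake_getD k x h]
  · rw [pre_ge _ _ (by simpa using h)]
    simp only [stake_length, sdrop]
    congr 1; omega

@[simp] lemma stake_pre (w : Word n) (x : Seq n) : stake w.length (pre w x) = w := by
  induction w with
  | nil => rfl
  | cons a w ih => simp [ih]

lemma stake_add (j k : ℕ) (x : Seq n) : stake (j + k) x = stake j x ++ stake k (sdrop j x) := by
  induction j generalizing x with
  | zero => simp
  | succ j ih =>
    have : j + 1 + k = (j + k) + 1 := by omega
    rw [this, stake_succ, stake_succ, ih, sdrop_sdrop]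
    simp [add_comm]

lemma stake_eq_iff {k : ℕ} {x y : Seq n} : stake k x = stake k y ↔ ∀ t < k, x t = y t := by
  simp [stake]

/-- No word occurs in front of all sequences, and no nonconstant map is hidden behind a
prefix: if `w x = v k(x)` for all `x` and the first letters of the `k(x)` are not all equal,
then `k` is the identity. -/
lemma eq_id_of_pre {w v : Word n} {k : Seq n → Seq n} (h : ∀ x, pre w x = pre v (k x))
    (hk : ∃ x y, k x 0 ≠ k y 0) : v.length = w.length ∧ ∀ x, k x = x := by
  obtain ⟨x, y, hxy⟩ := hk
  have hlen : v.length = w.length := by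
    rcases lt_trichotomy v.length w.length with hl | hl | hl
    · exfalso
      apply hxy
      have e : ∀ z, k z 0 = w.getD v.length default := fun z => by
        rw [← pre_lt w z hl, h z, ← Nat.add_zero v.length, pre_add]
      rw [e, e]
    · exact hl
    · exfalso
      have e : ∀ z : Seq n, z 0 = v.getD w.length default := fun z => by
        rw [← pre_lt v (k z) hl, ← h z, ← Nat.add_zero w.length, pre_add]
      have e0 := e fun _ => 0
      have e1 := e fun _ => 1
      rw [← e1] at e0
      simp at e0
  refine ⟨hlen, fun z => ?_⟩
  funext m
  rw [← pre_add v (k z) m, ← h z, hlen, pre_add]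

/-! ### The maps induced by the states of a transducer -/

lemma dsts_append (T : Transducer n) (u v : Word n) (q : T.Q) :
    dsts T (u ++ v) q = dsts T v (dsts T u q) := by
  induction u generalizing q with
  | nil => rfl
  | cons a u ih => simp [dsts, ih]

lemma outs_append (T : Transducer n) (u v : Word n) (q : T.Q) :
    outs T (u ++ v) q = outs T u q ++ outs T v (dsts T u q) := by
  induction u generalizing q with
  | nil => rfl
  | cons a u ih => simp [outs, dsts, ih]

lemma outs_stake_prefix (T : Transducer n) (q : T.Q) (x : Seq n) {j k : ℕ} (h : j ≤ k) :
    outs T (stake j x) q <+: outs T (stake k x) q := by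
  obtain ⟨d, rfl⟩ := Nat.exists_eq_add_of_le h
  rw [stake_add, outs_append]
  exact List.prefix_append _ _

lemma getD_of_prefix {u v : Word n} (h : u <+: v) {m : ℕ} (hm : m < u.length) :
    v.getD m default = u.getD m default := by
  obtain ⟨t, rfl⟩ := h
  simp [List.getD, List.getElem?_append_left hm]

lemma hmap_eq (T : Transducer n) (q : T.Q) (x : Seq n) {m k : ℕ}
    (h : m < (outs T (stake k x) q).length) :
    hmap T q x m = (outs T (stake k x) q).getD m default := by
  have hex : ∃ k, m < (outs T ((List.range k).map x) q).length := ⟨k, h⟩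
  unfold hmap
  rw [dif_pos hex]
  have hs := hex.choose_spec
  rcases le_total k hex.choose with hl | hl
  · exact getD_of_prefix (outs_stake_prefix T q x hl) h
  · exact (getD_of_prefix (outs_stake_prefix T q x hl) hs).symm

lemma outs_ne_nil {T : Transducer n} (hT : CircuitsNonempty T) :
    ∃ K, ∀ (w : Word n) (q : T.Q), K ≤ w.length → outs T w q ≠ [] := by
  classical
  have := Fintype.ofFinite T.Q
  refine ⟨Fintype.card T.Q, fun w q hw hout => ?_⟩
  obtain ⟨i, j, hij, he⟩ := Fintype.exists_ne_map_eq_of_card_lt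
    (fun i : Fin (Fintype.card T.Q + 1) => dsts T (w.take i) q) (by simp)
  wlog hlt : i < j generalizing i j
  · exact this j i hij.symm he.symm (lt_of_le_of_ne (not_lt.mp hlt) hij.symm)
  have hi : (i : ℕ) < j := hlt
  have hj : (j : ℕ) ≤ w.length := by omega
  have e1 : w.take j = w.take i ++ (w.take j).drop i := by
    conv_lhs => rw [← List.take_append_drop i (w.take j)]
    rw [List.take_take, min_eq_left hi.le]
  have e2 := congrArg (fun v => dsts T v q) e1
  simp only [dsts_append] at e2
  change dsts T (w.take i) q = dsts T (w.take j) q at he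
  rw [he] at e2
  refine hT _ ((w.take j).drop i) ?_ e2.symm ?_
  · intro h
    have := congrArg List.length h
    simp at this
    omega
  · rw [← List.take_append_drop j w, e1, outs_append, outs_append, he] at hout
    simp only [List.append_eq_nil_iff] at hout
    exact hout.1.2

lemma outs_length {T : Transducer n} (hT : CircuitsNonempty T) (N : ℕ) :
    ∃ K, ∀ (w : Word n) (q : T.Q), K ≤ w.length → N ≤ (outs T w q).length := by
  obtain ⟨K, hK⟩ := outs_ne_nil hT
  induction N with
  | zero => exact ⟨0, by simp⟩
  | succ N ih =>
    obtain ⟨L, hL⟩ := ih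
    refine ⟨L + K, fun w q hw => ?_⟩
    rw [← List.take_append_drop L w, outs_append, List.length_append]
    have h1 := hL (w.take L) q (by simp; omega)
    have h2 := List.length_pos_of_ne_nil
      (hK (w.drop L) (dsts T (w.take L) q) (by simp; omega))
    omega

lemma hmap_scons {T : Transducer n} (hT : CircuitsNonempty T) (q : T.Q) (a : A n) (x : Seq n) :
    hmap T q (scons a x) = pre (T.out a q) (hmap T (T.tr a q) x) := by
  funext m
  obtain ⟨K, hK⟩ := outs_length hT (m + 1)
  have h1 := hK (stake K x) (T.tr a q) (by simp)
  have e : outs T (stake (K + 1) (scons a x)) q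
      = T.out a q ++ outs T (stake K x) (T.tr a q) := by simp [outs]
  rw [hmap_eq T q (scons a x) (k := K + 1) (by rw [e, List.length_append]; omega), e]
  rcases lt_or_ge m (T.out a q).length with h | h
  · rw [pre_lt _ _ h, getD_of_prefix (List.prefix_append _ _) h]
  · rw [pre_ge _ _ h, hmap_eq T _ x (k := K) (by omega), List.getD, List.getD,
      List.getElem?_append_right h]

lemma map_pre_of_scons {T : Transducer n} {g : T.Q → Seq n → Seq n}
    (hg : ∀ q a x, g q (scons a x) = pre (T.out a q) (g (T.tr a q) x))
    (q : T.Q) (w : Word n) (x : Seq n) :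
    g q (pre w x) = pre (outs T w q) (g (dsts T w q) x) := by
  induction w generalizing q with
  | nil => rfl
  | cons a w ih => simp [hg, ih, outs, dsts, pre_append]

lemma hmap_pre {T : Transducer n} (hT : CircuitsNonempty T) (q : T.Q) (w : Word n) (x : Seq n) :
    hmap T q (pre w x) = pre (outs T w q) (hmap T (dsts T w q) x) :=
  map_pre_of_scons (hmap_scons hT) q w x

/-- Finitely many letters of the output are determined by finitely many letters of the
input. -/
lemma hmap_local {T : Transducer n} (hT : CircuitsNonempty T) (q : T.Q) (m : ℕ) :
    ∃ K, ∀ x y : Seq n, stake K x = stake K y → ∀ i ≤ m, hmap T q x i = hmap T q y i := by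
  obtain ⟨K, hK⟩ := outs_length hT (m + 1)
  refine ⟨K, fun x y h i hi => ?_⟩
  have h1 := hK (stake K x) q (by simp)
  rw [hmap_eq T q x (k := K) (by omega), hmap_eq T q y (k := K) (by rw [← h]; omega), h]

lemma hmap_continuous {T : Transducer n} (hT : CircuitsNonempty T) (q : T.Q) :
    Continuous (hmap T q) := by
  refine continuous_pi fun m => ?_
  obtain ⟨K, hK⟩ := hmap_local hT q m
  refine IsLocallyConstant.continuous ((IsLocallyConstant.iff_eventually_eq _).2 fun x => ?_)
  have : ∀ᶠ y in nhds x, ∀ t ∈ Finset.range K, y t = x t := by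
    rw [Filter.eventually_all_finset]
    intro t _
    have hc : Continuous fun y : Seq n => y t := continuous_apply t
    exact (hc.continuousAt (x := x)).eventually (mem_nhds_discrete.2 (Set.mem_singleton (x t)))
  filter_upwards [this] with y hy
  exact hK y x (stake_eq_iff.2 fun t ht => hy t (Finset.mem_range.2 ht)) m le_rfl

/-- An injective family of maps satisfying the recursion of the induced maps of a transducer
consists of the induced maps; the injectivity forces circuits to have nonempty output, since a
circuit `w` without output would give `g q (w x) = g q x`. -/
lemma hmap_unique {T : Transducer n} {g : T.Q → Seq n → Seq n}
    (hg : ∀ q a x, g q (scons a x) = pre (T.out a q) (g (T.tr a q) x))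
    (hinj : ∀ q, Function.Injective (g q)) :
    CircuitsNonempty T ∧ ∀ q, hmap T q = g q := by
  have hT : CircuitsNonempty T := by
    intro q w hw hd ho
    cases w with
    | nil => exact hw rfl
    | cons a w =>
      obtain ⟨b, hb⟩ := exists_ne a
      have := map_pre_of_scons hg q (a :: w) fun _ => b
      rw [hd, ho, pre_nil] at this
      exact hb (congrFun (hinj q this) 0).symm
  refine ⟨hT, fun q => ?_⟩
  funext x m
  obtain ⟨K, hK⟩ := outs_length hT (m + 1)
  have h1 := hK (stake K x) q (by simp)
  rw [hmap_eq T q x (k := K) (by omega)]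
  conv_rhs => rw [← pre_stake K x]
  rw [map_pre_of_scons hg, pre_lt _ _ (by omega)]

/-! ### Cores, products and minimal representatives -/

/-- The transducers considered below: circuits have nonempty output and all states induce
injective maps. -/
def Good (T : Transducer n) : Prop :=
  CircuitsNonempty T ∧ ∀ q, Function.Injective (hmap T q)

lemma good_of_family {T : Transducer n} {g : T.Q → Seq n → Seq n}
    (hg : ∀ q a x, g q (scons a x) = pre (T.out a q) (g (T.tr a q) x))
    (hinj : ∀ q, Function.Injective (g q)) : Good T ∧ ∀ q, hmap T q = g q := by
  obtain ⟨h1, h2⟩ := hmap_unique hg hinj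
  exact ⟨⟨h1, fun q => by rw [h2]; exact hinj q⟩, h2⟩

lemma SyncAt.succ {T : Transducer n} {k : ℕ} (h : SyncAt T k) : SyncAt T (k + 1) := by
  intro w hw p q
  cases w with
  | nil => simp at hw
  | cons a w => exact h w (by simpa using hw) _ _

lemma SyncAt.add {T : Transducer n} {k : ℕ} (h : SyncAt T k) (j : ℕ) : SyncAt T (k + j) := by
  induction j with
  | zero => exact h
  | succ j ih => exact ih.succ

lemma SyncAt.mono {T : Transducer n} {k l : ℕ} (h : SyncAt T k) (hl : k ≤ l) : SyncAt T l := by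
  obtain ⟨j, rfl⟩ := Nat.exists_eq_add_of_le hl
  exact h.add j

lemma CoreState.tr {T : Transducer n} {q : T.Q} (h : CoreState T q) (a : A n) :
    CoreState T (T.tr a q) := by
  obtain ⟨k, w, hk, hw, hq⟩ := h
  refine ⟨k + 1, w ++ [a], hk.succ, by simp [hw], fun p => ?_⟩
  rw [dsts_append, hq]; rfl

lemma CoreStateE.tr {T : Transducer n} {q : T.Q} (h : CoreStateE T q) (a : A n) :
    CoreStateE T (T.tr a q) :=
  h.imp (fun h => h.tr a) id

lemma CoreState.exists_word {T : Transducer n} {q : T.Q} (h : CoreState T q) (p : T.Q) :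
    ∃ w, dsts T w p = q := by
  obtain ⟨k, w, hk, hw, hq⟩ := h
  exact ⟨w, hq p⟩

lemma coreState_dsts {T : Transducer n} {w : Word n} (h : SyncAt T w.length) (q : T.Q) :
    CoreState T (dsts T w q) :=
  ⟨w.length, w, h, rfl, fun p => h w rfl p q⟩

lemma CoreStateE.coreState {T : Transducer n} (hs : StronglySync T) {q : T.Q}
    (h : CoreStateE T q) : CoreState T q := by
  obtain ⟨k, hk⟩ := hs
  refine h.resolve_right fun h => h (dsts T (List.replicate k 0) q) ?_
  exact coreState_dsts (by simpa using hk) q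

lemma coreT_tr (T : Transducer n) (a : A n) (q : (coreT T).Q) :
    ((coreT T).tr a q).1 = T.tr a q.1 := by
  exact congrArg Subtype.val (dif_pos (q.2.tr a))

lemma coreT_dsts (T : Transducer n) (w : Word n) (q : (coreT T).Q) :
    (dsts (coreT T) w q).1 = dsts T w q.1 := by
  induction w generalizing q with
  | nil => rfl
  | cons a w ih => simp only [dsts]; rw [ih, coreT_tr]

lemma coreT_good {T : Transducer n} (hT : Good T) :
    Good (coreT T) ∧ ∀ q : (coreT T).Q, hmap (coreT T) q = hmap T q.1 := by
  refine good_of_family (g := fun q : (coreT T).Q => hmap T q.1) (fun q a x => ?_) fun q => hT.2 q.1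
  change hmap T q.1 (scons a x) = pre (T.out a q.1) (hmap T ((coreT T).tr a q).1 x)
  rw [hmap_scons hT.1, coreT_tr]

lemma SyncAt.coreT {T : Transducer n} {k : ℕ} (h : SyncAt T k) : SyncAt (coreT T) k := by
  intro w hw p q
  apply Subtype.ext
  rw [coreT_dsts, coreT_dsts]
  exact h w hw _ _

lemma coreT_isCore {T : Transducer n} (hs : StronglySync T) : IsCore (coreT T) := by
  intro q
  obtain ⟨k, w, hk, hw, hq⟩ := q.2.coreState hs
  refine ⟨k, w, hk.coreT, hw, fun p => Subtype.ext ?_⟩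
  rw [coreT_dsts, hq]

lemma prodT_dsts (T U : Transducer n) (w : Word n) (q : T.Q) (p : U.Q) :
    dsts (prodT T U) w (q, p) = (dsts T w q, dsts U (outs T w q) p) := by
  induction w generalizing q p with
  | nil => rfl
  | cons a w ih =>
    simp only [dsts, outs, dsts_append]
    exact ih _ _

lemma prodT_good {T U : Transducer n} (hT : Good T) (hU : Good U) :
    Good (prodT T U) ∧ ∀ q p, hmap (prodT T U) (q, p) = hmap U p ∘ hmap T q := by
  have := good_of_family (T := prodT T U) (g := fun s => hmap U s.2 ∘ hmap T s.1)
    (fun s a x => ?_) fun s => (hU.2 _).comp (hT.2 _)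
  · exact ⟨this.1, fun q p => this.2 (q, p)⟩
  · simp only [Function.comp]
    rw [hmap_scons hT.1, hmap_pre hU.1]
    rfl

/-- Once the first factor is synchronized, it writes one and the same word whatever its
starting state was, and a long enough output word synchronizes the second factor. -/
lemma prodT_sync {T U : Transducer n} (hT : CircuitsNonempty T) (sT : StronglySync T)
    (sU : StronglySync U) : StronglySync (prodT T U) := by
  obtain ⟨k, hk⟩ := sT
  obtain ⟨l, hl⟩ := sU
  obtain ⟨K, hK⟩ := outs_length hT l
  refine ⟨k + K, fun w hw p q => ?_⟩
  obtain ⟨p1, p2⟩ := p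
  obtain ⟨q1, q2⟩ := q
  have e1 : dsts T (w.take k) p1 = dsts T (w.take k) q1 := hk _ (by simp; omega) _ _
  rw [← List.take_append_drop k w, prodT_dsts, prodT_dsts, dsts_append, dsts_append,
    outs_append, outs_append, dsts_append, dsts_append, e1]
  refine Prod.ext rfl ?_
  exact hl.mono (hK (w.drop k) _ (by simp; omega)) _ rfl _ _

lemma Good.finiteExtent {T : Transducer n} (hT : Good T) (q : T.Q) : FiniteExtent T q := by
  by_contra h
  simp only [FiniteExtent, Disagree, not_exists, not_not] at h
  have := hT.2 q (funext fun j => h j (fun _ => 0) fun _ => 1)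
  simpa using congrFun this 0

lemma disagree_extentLen {T : Transducer n} {q : T.Q} (h : FiniteExtent T q) :
    Disagree T q (extentLen T q) := by
  classical
  unfold extentLen
  rw [dif_pos h]
  convert Nat.find_spec h

lemma extentLen_le {T : Transducer n} {q : T.Q} {j : ℕ} (h : Disagree T q j) :
    extentLen T q ≤ j := by
  classical
  unfold extentLen
  rw [dif_pos ⟨j, h⟩]
  convert Nat.find_min' _ h

lemma not_disagree {T : Transducer n} {q : T.Q} {j : ℕ} (h : j < extentLen T q)
    (x y : Seq n) : hmap T q x j = hmap T q y j := by
  by_contra hne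
  exact absurd (extentLen_le ⟨x, y, hne⟩) (by omega)

@[simp] lemma extentWord_length (T : Transducer n) (q : T.Q) :
    (extentWord T q).length = extentLen T q := by simp [extentWord]

lemma pre_extentWord (T : Transducer n) (q : T.Q) (x : Seq n) :
    pre (extentWord T q) (sdrop (extentLen T q) (hmap T q x)) = hmap T q x := by
  have : extentWord T q = stake (extentLen T q) (hmap T q x) := by
    unfold extentWord stake
    apply List.map_congr_left
    intro j hj
    exact not_disagree (List.mem_range.1 hj) _ _
  rw [this, pre_stake]

lemma sdrop_pre_of_le {w : Word n} {k : ℕ} (h : k ≤ w.length) (x : Seq n) :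
    sdrop k (pre w x) = pre (w.drop k) x := by
  have h1 : (w.take k).length = k := by simp [h]
  have h2 := sdrop_pre (w.take k) (pre (w.drop k) x)
  rwa [← pre_append, List.take_append_drop, h1] at h2

lemma sdrop_injective_of_pre {X : Type} {w : Word n} {f g : X → Seq n}
    (h : ∀ x, pre w (g x) = f x) (hf : Function.Injective f) : Function.Injective g :=
  fun x y hxy => hf (by rw [← h, ← h, hxy])

lemma rem_good {T : Transducer n} (hT : Good T) :
    Good (removeIncomplete T) ∧
      ∀ q : T.Q, hmap (removeIncomplete T) q = fun x => sdrop (extentLen T q) (hmap T q x) := by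
  have ho : ∀ (a : A n) (q : T.Q), (removeIncomplete T).out a q
      = (T.out a q ++ extentWord T (T.tr a q)).drop (extentLen T q) := fun a q =>
    if_pos hT.finiteExtent
  have key : ∀ (a : A n) (q : T.Q) (x : Seq n),
      sdrop (extentLen T q) (hmap T q (scons a x))
      = pre ((T.out a q ++ extentWord T (T.tr a q)).drop (extentLen T q))
        (sdrop (extentLen T (T.tr a q)) (hmap T (T.tr a q) x)) := by
    intro a q x
    obtain ⟨y, z, hyz⟩ := disagree_extentLen (hT.finiteExtent (T.tr a q))
    have hle : extentLen T q ≤ (T.out a q).length + extentLen T (T.tr a q) := by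
      refine extentLen_le ⟨scons a y, scons a z, ?_⟩
      rwa [hmap_scons hT.1, hmap_scons hT.1, pre_add, pre_add]
    rw [← sdrop_pre_of_le (by simpa using hle), pre_append, pre_extentWord, hmap_scons hT.1]
  exact good_of_family (T := removeIncomplete T)
    (g := fun (q : T.Q) x => sdrop (extentLen T q) (hmap T q x))
    (fun q a x => (key a q x).trans (congrArg (fun w => pre w _) (ho a q).symm))
    fun q => sdrop_injective_of_pre (pre_extentWord T q) (hT.2 q)

lemma rem_noIncomplete {T : Transducer n} (hT : Good T) : NoIncomplete (removeIncomplete T) := by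
  intro (q : T.Q)
  obtain ⟨y, z, hyz⟩ := disagree_extentLen (hT.finiteExtent q)
  have e : ∀ x, hmap (removeIncomplete T) q x 0 = hmap T q x (extentLen T q) :=
    fun x => congrFun (congrFun ((rem_good hT).2 q) x) 0
  exact ⟨y, z, fun h => hyz ((e y).symm.trans (h.trans (e z)))⟩

lemma rem_dsts (T : Transducer n) (w : Word n) (q : T.Q) :
    dsts (removeIncomplete T) w q = dsts T w q := by
  induction w generalizing q with
  | nil => rfl
  | cons a w ih => exact ih _

lemma rem_syncAt (T : Transducer n) (k : ℕ) : SyncAt (removeIncomplete T) k ↔ SyncAt T k := by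
  refine forall_congr' fun w => forall_congr' fun _ => forall_congr' fun (p : T.Q) =>
    forall_congr' fun (q : T.Q) => ?_
  rw [rem_dsts, rem_dsts]
  exact Iff.rfl

lemma rem_coreState (T : Transducer n) (q : T.Q) :
    CoreState (removeIncomplete T) q ↔ CoreState T q := by
  refine exists_congr fun k => exists_congr fun w => and_congr (rem_syncAt T k)
    (and_congr Iff.rfl (forall_congr' fun (p : T.Q) => ?_))
  rw [rem_dsts]
  exact Iff.rfl

/-- The class of a state in the quotient by ω-equivalence. -/
def cls (T : Transducer n) (q : T.Q) : (quotT T).Q := Quotient.mk (omegaSetoid T) q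

/-- A chosen representative of a class of ω-equivalent states. -/
noncomputable def rep (T : Transducer n) (c : (quotT T).Q) : T.Q := Quotient.out c

lemma cls_rep (T : Transducer n) (c : (quotT T).Q) : cls T (rep T c) = c :=
  Quotient.out_eq c

lemma hmap_rep (T : Transducer n) (q : T.Q) : hmap T (rep T (cls T q)) = hmap T q :=
  Quotient.exact (s := omegaSetoid T) (Quotient.out_eq (cls T q))

lemma cls_eq {T : Transducer n} {p q : T.Q} (h : hmap T p = hmap T q) : cls T p = cls T q :=
  Quotient.sound (s := omegaSetoid T) h

lemma quotT_good {T : Transducer n} (hT : Good T) :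
    Good (quotT T) ∧ ∀ q, hmap (quotT T) (cls T q) = hmap T q := by
  have := good_of_family (T := quotT T)
    (g := fun c => hmap T (rep T c)) (fun c a x => ?_) fun c => hT.2 _
  · refine ⟨this.1, fun q => ?_⟩
    rw [this.2]
    exact hmap_rep T q
  · rw [hmap_scons hT.1, ← hmap_rep T (T.tr a _)]
    rfl

/-- If there is no incomplete response, ω-equivalent states write the same words and move to
ω-equivalent states. -/
lemma hmap_tr_congr {T : Transducer n} (hT : Good T) (hN : NoIncomplete T) {p q : T.Q}
    (h : hmap T p = hmap T q) (a : A n) : hmap T (T.tr a p) = hmap T (T.tr a q) := by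
  have e : ∀ x, pre (T.out a p) (hmap T (T.tr a p) x)
      = pre (T.out a q) (hmap T (T.tr a q) x) := fun x => by
    rw [← hmap_scons hT.1, ← hmap_scons hT.1, h]
  have key : ∀ p q : T.Q, (∀ x, pre (T.out a p) (hmap T (T.tr a p) x)
      = pre (T.out a q) (hmap T (T.tr a q) x)) →
      (T.out a q).length ≤ (T.out a p).length := by
    intro p q e
    by_contra! hl
    obtain ⟨x, y, hxy⟩ := hN (T.tr a p)
    apply hxy
    have e' : ∀ z, hmap T (T.tr a p) z 0 = (T.out a q).getD (T.out a p).length default :=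
      fun z => by rw [← pre_lt _ (hmap T (T.tr a q) z) hl, ← e,
        ← Nat.add_zero (T.out a p).length, pre_add]
    rw [e', e']
  have hl := le_antisymm (key q p fun x => (e x).symm) (key p q e)
  funext x
  rw [← sdrop_pre (T.out a p) (hmap T (T.tr a p) x), e, hl, sdrop_pre]

lemma quotT_dsts {T : Transducer n} (hT : Good T) (hN : NoIncomplete T) (w : Word n) (q : T.Q) :
    dsts (quotT T) w (cls T q) = cls T (dsts T w q) := by
  induction w generalizing q with
  | nil => rfl
  | cons a w ih =>
    have : (quotT T).tr a (cls T q) = cls T (T.tr a q) :=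
      cls_eq (hmap_tr_congr hT hN (hmap_rep T q) a)
    simp only [dsts]
    rw [this, ih]

/-- `Minimal T`: the nondegenerate elements of the monoid `M_n` with injective states. -/
def Minimal (T : Transducer n) : Prop :=
  Good T ∧ StronglySync T ∧ IsCore T ∧ NoIncomplete T ∧ WeaklyMinimal T

/-- The states of the minimal representative are the core states, with the common prefix of
their outputs removed. -/
lemma minRep_spec {T : Transducer n} (hT : Good T) (hs : StronglySync T) :
    Minimal (minRep T) ∧
    (∀ c, ∃ q, CoreState T q ∧ ∃ u, ∀ x, hmap T q x = pre u (hmap (minRep T) c x)) ∧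
    ∀ q, CoreState T q → ∃ c u, ∀ x, hmap T q x = pre u (hmap (minRep T) c x) := by
  obtain ⟨gR, hR⟩ := rem_good hT
  obtain ⟨gC, hC⟩ := coreT_good gR
  obtain ⟨gM, hM⟩ := quotT_good gC
  have hsR : StronglySync (removeIncomplete T) := hs.imp fun k hk => (rem_syncAt T k).2 hk
  have hN : NoIncomplete (coreT (removeIncomplete T)) := fun q => by
    obtain ⟨x, y, h⟩ := rem_noIncomplete hT q.1
    exact ⟨x, y, by rwa [hC]⟩
  have hsync : ∀ k, SyncAt (coreT (removeIncomplete T)) k → SyncAt (minRep T) k := by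
    intro k hk w hw p q
    change (quotT (coreT (removeIncomplete T))).Q at p q
    change dsts (quotT _) w p = dsts (quotT _) w q
    rw [← cls_rep _ p, ← cls_rep _ q, quotT_dsts gC hN, quotT_dsts gC hN, hk w hw]
  refine ⟨⟨gM, ?_, ?_, ?_, ?_⟩, ?_, ?_⟩
  · exact hsR.imp fun k hk => hsync k hk.coreT
  · intro (c : (quotT (coreT (removeIncomplete T))).Q)
    obtain ⟨k, w, hk, hw, hq⟩ := coreT_isCore hsR (rep _ c)
    refine ⟨k, w, hsync k hk, hw, fun p => ?_⟩
    change (quotT (coreT (removeIncomplete T))).Q at p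
    change dsts (quotT _) w p = c
    rw [← cls_rep _ p, quotT_dsts gC hN, hq]
    exact cls_rep _ c
  · intro (c : (quotT (coreT (removeIncomplete T))).Q)
    obtain ⟨x, y, h⟩ := hN (rep _ c)
    refine ⟨x, y, ?_⟩
    rwa [← hM, cls_rep] at h
  · intro (c : (quotT (coreT (removeIncomplete T))).Q) (d : (quotT _).Q) h
    change hmap (quotT _) c = hmap (quotT _) d at h
    rw [← cls_rep _ c, ← cls_rep _ d, hM, hM] at h
    rw [← cls_rep _ c, ← cls_rep _ d]
    exact cls_eq h
  · intro (c : (quotT (coreT (removeIncomplete T))).Q)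
    have hc : CoreStateE (removeIncomplete T) (rep _ c).1 := (rep _ c).2
    refine ⟨(rep _ c).1, (rem_coreState T _).1 (hc.coreState hsR), extentWord T (rep _ c).1,
      fun x => ?_⟩
    have e : hmap (quotT (coreT (removeIncomplete T))) c
        = hmap (removeIncomplete T) (rep _ c).1 := by
      rw [← hC, ← hM, cls_rep]
    have e2 := congrFun (e.trans (hR (rep _ c).1)) x
    exact (pre_extentWord T (rep _ c).1 x).symm.trans
      (congrArg (pre (extentWord T (rep _ c).1)) e2.symm)
  · intro q hq
    have hq' : CoreStateE (removeIncomplete T) q := Or.inl ((rem_coreState T q).2 hq)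
    refine ⟨cls (coreT (removeIncomplete T)) ⟨q, hq'⟩, extentWord T q, fun x => ?_⟩
    have e : hmap (quotT (coreT (removeIncomplete T)))
        (cls (coreT (removeIncomplete T)) ⟨q, hq'⟩) = hmap (removeIncomplete T) q :=
      (hM _).trans (hC _)
    have e2 := congrFun (e.trans (hR q)) x
    exact (pre_extentWord T q x).symm.trans (congrArg (pre (extentWord T q)) e2.symm)

lemma mulT_spec {T U : Transducer n} (hT : Good T) (hU : Good U) (sT : StronglySync T)
    (sU : StronglySync U) :
    Minimal (mulT T U) ∧ ∀ c, ∃ q p, CoreState (prodT T U) (q, p) ∧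
      ∃ u, ∀ x, hmap U p (hmap T q x) = pre u (hmap (mulT T U) c x) := by
  obtain ⟨gP, hP⟩ := prodT_good hT hU
  have sP := prodT_sync hT.1 sT sU
  obtain ⟨gC, hC⟩ := coreT_good gP
  obtain ⟨h1, h2, -⟩ := minRep_spec gC (sP.imp fun k hk => hk.coreT)
  refine ⟨h1, fun c => ?_⟩
  obtain ⟨⟨⟨q, p⟩, hqp⟩, -, u, hu⟩ := h2 c
  refine ⟨q, p, hqp.coreState sP, u, fun x => ?_⟩
  have e := (hC ⟨(q, p), hqp⟩).trans (hP q p)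
  exact (congrFun e x).symm.trans (hu x)

lemma hmap_oneT (q : (oneT : Transducer n).Q) : hmap oneT q = id :=
  (good_of_family (T := (oneT : Transducer n)) (g := fun _ => id) (fun _ _ _ => rfl)
    fun _ => Function.injective_id).2 q

/-- A weakly minimal transducer all of whose states induce the identity is trivial. -/
lemma omegaEq_oneT {T : Transducer n} (hW : WeaklyMinimal T) (h : ∀ q, hmap T q = id) :
    OmegaEq T oneT := by
  have hs : Subsingleton T.Q := ⟨fun p q => hW p q (by rw [h, h])⟩
  have : Unique T.Q := ⟨⟨Classical.choice T.ne⟩, fun q => Subsingleton.elim _ _⟩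
  have : Unique (oneT : Transducer n).Q := ⟨⟨PUnit.unit⟩, fun q => rfl⟩
  exact ⟨Equiv.ofUnique _ _, fun q => by rw [h, hmap_oneT]⟩

/-- An element of `SO_n` is nondegenerate, since the states of `Z_x` are not injective. -/
lemma SOnMem.minimal {T : Transducer n} (h : SOnMem T) : Minimal T := by
  obtain ⟨⟨h1, h2, h3, h4⟩, h5⟩ := h
  have hG : Good T := ⟨h1, fun q => (h5 q).1⟩
  rcases h4 with h4 | ⟨x, -, -, f, hf⟩
  · exact ⟨hG, h2, h3, h4⟩
  · exfalso
    have q := Classical.choice T.ne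
    have he : ∀ (w v : Word n), w.length = v.length → ∀ p,
        outs (Zword x) w p = outs (Zword x) v p := by
      intro w
      induction w with
      | nil => intro v hv p; rw [List.length_eq_zero_iff.1 hv.symm]
      | cons a w ih =>
        intro v hv p
        cases v with
        | nil => simp at hv
        | cons b v =>
          simp only [outs]
          rw [show (Zword x).tr a p = (Zword x).tr b p from rfl, ih v (by simpa using hv)]
          rfl
    have hc : hmap T q (fun _ => 0) = hmap T q (fun _ => 1) := by
      classical
      rw [hf]
      have hd : ∀ (F G : ℕ → Word n), F = G → ∀ m : ℕ,
          (if h : ∃ k, m < (F k).length then (F h.choose).getD m default else default) =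
          if h : ∃ k, m < (G k).length then (G h.choose).getD m default else default := by
        rintro F _ rfl m; rfl
      funext m
      unfold hmap
      convert hd _ _ (funext fun k => he ((List.range k).map fun _ => (0 : A n))
        ((List.range k).map fun _ => (1 : A n)) (by simp) (f q)) m
    simpa using congrFun (hG.2 q hc) 0

/-! ### Tail equivalence -/

/-- Two sequences are tail equivalent if they agree after deleting suitable prefixes, possibly
of different lengths. -/
def TailEq (x y : Seq n) : Prop := ∃ i j, sdrop i x = sdrop j y

lemma TailEq.rfl' {x : Seq n} : TailEq x x := ⟨0, 0, rfl⟩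

lemma TailEq.symm {x y : Seq n} : TailEq x y → TailEq y x := fun ⟨i, j, h⟩ => ⟨j, i, h.symm⟩

lemma TailEq.trans {x y z : Seq n} : TailEq x y → TailEq y z → TailEq x z := by
  rintro ⟨i, j, h⟩ ⟨k, l, h'⟩
  refine ⟨i + k, l + j, ?_⟩
  rw [← sdrop_sdrop, h, sdrop_sdrop, add_comm j k, ← sdrop_sdrop, h', sdrop_sdrop]

lemma tailEq_pre (u : Word n) (x : Seq n) : TailEq (pre u x) x := ⟨u.length, 0, by simp⟩

lemma TailEq.exists_pre {x y : Seq n} : TailEq x y → ∃ u v z, x = pre u z ∧ y = pre v z := by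
  rintro ⟨i, j, h⟩
  exact ⟨stake i x, stake j y, sdrop i x, (pre_stake i x).symm, by rw [h, pre_stake]⟩

lemma hmap_tail_state {T : Transducer n} (hT : CircuitsNonempty T) (sT : StronglySync T)
    (q p : T.Q) (x : Seq n) : TailEq (hmap T q x) (hmap T p x) := by
  obtain ⟨k, hk⟩ := sT
  rw [← pre_stake k x, hmap_pre hT, hmap_pre hT, hk (stake k x) (by simp) q p]
  exact (tailEq_pre _ _).trans (tailEq_pre _ _).symm

/-- All states of a strongly synchronizing transducer induce one and the same map on tail
equivalence classes. -/
lemma hmap_tail {T : Transducer n} (hT : CircuitsNonempty T) (sT : StronglySync T)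
    (q p : T.Q) {x y : Seq n} (h : TailEq x y) : TailEq (hmap T q x) (hmap T p y) := by
  obtain ⟨u, v, z, rfl, rfl⟩ := h.exists_pre
  rw [hmap_pre hT, hmap_pre hT]
  exact (tailEq_pre _ _).trans ((hmap_tail_state hT sT _ _ z).trans (tailEq_pre _ _).symm)

lemma mulT_tail {T U : Transducer n} (hT : Good T) (hU : Good U) (sT : StronglySync T)
    (sU : StronglySync U) (q : T.Q) (p : U.Q) (c : (mulT T U).Q) (x : Seq n) :
    TailEq (hmap U p (hmap T q x)) (hmap (mulT T U) c x) := by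
  obtain ⟨q', p', -, u, hu⟩ := (mulT_spec hT hU sT sU).2 c
  refine TailEq.trans ?_ (tailEq_pre u _)
  rw [← hu]
  exact hmap_tail hU.1 sU _ _ (hmap_tail_state hT.1 sT _ _ _)

lemma tail_commute {T U : Transducer n} (hT : Good T) (hU : Good U) (sT : StronglySync T)
    (sU : StronglySync U) (h : OmegaEq (mulT T U) (mulT U T)) (q : T.Q) (p : U.Q) (x : Seq n) :
    TailEq (hmap U p (hmap T q x)) (hmap T q (hmap U p x)) := by
  obtain ⟨f, hf⟩ := h
  have c := Classical.choice (mulT T U).ne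
  refine (mulT_tail hT hU sT sU q p c x).trans ?_
  rw [hf]
  exact (mulT_tail hU hT sU sT p q (f c) x).symm

lemma tail_injective {T V : Transducer n} (hT : Good T) (hV : Good V) (sT : StronglySync T)
    (sV : StronglySync V) (h : OmegaEq (mulT T V) oneT) (q : T.Q) {x y : Seq n}
    (hxy : TailEq (hmap T q x) (hmap T q y)) : TailEq x y := by
  obtain ⟨f, hf⟩ := h
  have c := Classical.choice (mulT T V).ne
  have p := Classical.choice V.ne
  have key : ∀ z, TailEq (hmap V p (hmap T q z)) z := fun z => by
    have := mulT_tail hT hV sT sV q p c z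
    rwa [hf, hmap_oneT] at this
  exact (key x).symm.trans ((hmap_tail hV.1 sV p p hxy).trans (key y))

/-! ### Marker swaps -/

/-- The sequence `x` begins with the word `v`. -/
def Starts (v : Word n) (x : Seq n) : Prop := ∃ z, x = pre v z

lemma starts_iff {v : Word n} {x : Seq n} : Starts v x ↔ stake v.length x = v := by
  constructor
  · rintro ⟨z, rfl⟩; simp
  · intro h; exact ⟨sdrop v.length x, by conv_rhs => rw [← h]; simp⟩

lemma Starts.comparable {v w : Word n} {x : Seq n} (hv : Starts v x) (hw : Starts w x) :
    v <+: w ∨ w <+: v := by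
  have key : ∀ {v w : Word n}, v.length ≤ w.length → Starts v x → Starts w x → v <+: w := by
    intro v w hl hv hw
    rw [starts_iff] at hv hw
    obtain ⟨d, hd⟩ := Nat.exists_eq_add_of_le hl
    rw [hd, stake_add, hv] at hw
    exact ⟨_, hw⟩
  rcases le_total v.length w.length with h | h
  · exact Or.inl (key h hv hw)
  · exact Or.inr (key h hw hv)

lemma starts_cons {a : A n} {v : Word n} {x : Seq n} :
    Starts (a :: v) x ↔ x 0 = a ∧ Starts v (sdrop 1 x) := by
  constructor
  · rintro ⟨z, rfl⟩; exact ⟨rfl, z, by simp⟩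
  · rintro ⟨h, z, hz⟩
    exact ⟨z, by rw [← scons_eta x, h, hz]; rfl⟩

/-- One of the two words `w₁`, `w₂`. -/
def Mk (w₁ w₂ w : Word n) : Prop := w = w₁ ∨ w = w₂

/-- Two words form a pair of markers if distinct occurrences of them in a sequence cannot
overlap: no nonempty prefix of one is a suffix of one, except for the full words, and neither
word contains the other. -/
structure Markers (w₁ w₂ : Word n) : Prop where
  ne_nil : ∀ w, Mk w₁ w₂ w → w ≠ []
  overlap : ∀ w w' s, Mk w₁ w₂ w → Mk w₁ w₂ w' → s ≠ [] → s <+: w → s <:+ w' → s = w ∧ s = w'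
  infx : ∀ w w', Mk w₁ w₂ w → Mk w₁ w₂ w' → w <:+: w' → w = w'
  ne : w₁ ≠ w₂

open Classical in
/-- Interchanges `w₁` and `w₂`. -/
noncomputable def swW (w₁ w₂ w : Word n) : Word n :=
  if w = w₁ then w₂ else if w = w₂ then w₁ else w

open Classical in
/-- The map on sequences reading from left to right and replacing every occurrence of `w₁` by
`w₂` and vice versa; the value is the letter of the image at position `m`. -/
noncomputable def swAt (w₁ w₂ : Word n) (m : ℕ) (x : Seq n) : A n :=
  if Starts w₁ x then
    if m < w₂.length then w₂.getD m default
    else if w₂.length = 0 then default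
    else swAt w₁ w₂ (m - w₂.length) (sdrop w₁.length x)
  else if Starts w₂ x then
    if m < w₁.length then w₁.getD m default
    else if w₁.length = 0 then default
    else swAt w₁ w₂ (m - w₁.length) (sdrop w₂.length x)
  else if m = 0 then x 0 else swAt w₁ w₂ (m - 1) (sdrop 1 x)
termination_by m
decreasing_by all_goals omega

/-- The marker swap, interchanging all occurrences of `w₁` and `w₂`. -/
noncomputable def sw (w₁ w₂ : Word n) (x : Seq n) : Seq n := fun m => swAt w₁ w₂ m x

section swap
variable {w₁ w₂ : Word n}

lemma Markers.not_starts (h : Markers w₁ w₂) {w w' : Word n} {x : Seq n} (hw : Mk w₁ w₂ w)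
    (hw' : Mk w₁ w₂ w') (hx : Starts w x) (hx' : Starts w' x) : w = w' := by
  rcases hx.comparable hx' with h' | h'
  · exact h.infx _ _ hw hw' h'.isInfix
  · exact (h.infx _ _ hw' hw h'.isInfix).symm

lemma Markers.swW_mk (_ : Markers w₁ w₂) {w : Word n} (hw : Mk w₁ w₂ w) :
    Mk w₁ w₂ (swW w₁ w₂ w) := by
  unfold swW Mk at *
  split_ifs <;> tauto

lemma Markers.swW_swW (h : Markers w₁ w₂) {w : Word n} (hw : Mk w₁ w₂ w) :
    swW w₁ w₂ (swW w₁ w₂ w) = w := by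
  have := h.ne.symm
  rcases hw with rfl | rfl <;> simp [swW, this]

lemma Markers.sw_pre (h : Markers w₁ w₂) {w : Word n} (hw : Mk w₁ w₂ w) (x : Seq n) :
    sw w₁ w₂ (pre w x) = pre (swW w₁ w₂ w) (sw w₁ w₂ x) := by
  have hne := h.ne.symm
  have l1 : w₁.length ≠ 0 := by simpa using h.ne_nil _ (Or.inl rfl)
  have l2 : w₂.length ≠ 0 := by simpa using h.ne_nil _ (Or.inr rfl)
  funext m
  rcases hw with rfl | rfl
  · change swAt _ _ m _ = _
    rw [swAt, if_pos ⟨x, rfl⟩, if_neg l2, sdrop_pre, swW, if_pos rfl]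
    split_ifs with hm
    · rw [pre_lt _ _ hm]
    · rw [pre_ge _ _ (by omega)]; rfl
  · change swAt _ _ m _ = _
    rw [swAt, if_neg fun h' => h.ne (h.not_starts (Or.inl rfl) (Or.inr rfl) h' ⟨x, rfl⟩),
      if_pos ⟨x, rfl⟩, if_neg l1, sdrop_pre, swW, if_neg hne, if_pos rfl]
    split_ifs with hm
    · rw [pre_lt _ _ hm]
    · rw [pre_ge _ _ (by omega)]; rfl

lemma sw_scons {a : A n} {x : Seq n} (h : ∀ w, Mk w₁ w₂ w → ¬ Starts w (scons a x)) :
    sw w₁ w₂ (scons a x) = scons a (sw w₁ w₂ x) := by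
  funext m
  change swAt _ _ m _ = _
  rw [swAt, if_neg (h _ (Or.inl rfl)), if_neg (h _ (Or.inr rfl))]
  cases m with
  | zero => rfl
  | succ m => simp [sw]

/-- A word none of whose nonempty suffixes can be the beginning of, or begin with, a marker is
not created by the swap. -/
lemma Markers.starts_of_sw (h : Markers w₁ w₂) (v : Word n)
    (hv : ∀ s, s ≠ [] → s <:+ v → ∀ w, Mk w₁ w₂ w → ¬ s <+: w ∧ ¬ w <+: s) (y : Seq n)
    (hy : Starts v (sw w₁ w₂ y)) : Starts v y := by
  induction v generalizing y with
  | nil => exact ⟨y, rfl⟩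
  | cons c v ih =>
    obtain ⟨a, z, rfl⟩ := exists_scons y
    have hn : ∀ w, Mk w₁ w₂ w → ¬ Starts w (scons a z) := by
      rintro w hw ⟨t, ht⟩
      rw [ht, h.sw_pre hw] at hy
      have := hv (c :: v) (by simp) (List.suffix_refl _) _ (h.swW_mk hw)
      rcases hy.comparable ⟨_, rfl⟩ with h' | h'
      · exact this.1 h'
      · exact this.2 h'
    rw [sw_scons hn, starts_cons] at hy
    rw [starts_cons]
    refine ⟨hy.1, ?_⟩
    rw [sdrop_scons] at hy ⊢
    exact ih (fun s hs hsv => hv s hs (hsv.trans (List.suffix_cons _ _))) _ hy.2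

lemma Markers.sw_not_starts (h : Markers w₁ w₂) {a : A n} {x : Seq n}
    (hn : ∀ w, Mk w₁ w₂ w → ¬ Starts w (scons a x)) (w : Word n) (hw : Mk w₁ w₂ w) :
    ¬ Starts w (scons a (sw w₁ w₂ x)) := by
  intro hs
  obtain ⟨b, v, rfl⟩ := List.exists_cons_of_ne_nil (h.ne_nil w hw)
  rw [starts_cons, sdrop_scons, scons_zero] at hs
  refine hn _ hw (starts_cons.2 ⟨hs.1, ?_⟩)
  rw [sdrop_scons]
  refine h.starts_of_sw v (fun s hs hsv w' hw' => ?_) x hs.2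
  have hl := hsv.length_le
  have hsuf : s <:+ b :: v := hsv.trans (List.suffix_cons _ _)
  constructor
  · intro hp
    have := congrArg List.length (h.overlap _ _ s hw' hw hs hp hsuf).2
    simp at this; omega
  · intro hp
    have := congrArg List.length (h.infx _ _ hw' hw (hp.isInfix.trans hsuf.isInfix))
    have := hp.length_le
    simp at *; omega

lemma Markers.sw_sw (h : Markers w₁ w₂) (x : Seq n) : sw w₁ w₂ (sw w₁ w₂ x) = x := by
  funext m
  induction m using Nat.strong_induction_on generalizing x with
  | _ m ih =>
    by_cases hx : ∃ w, Mk w₁ w₂ w ∧ Starts w x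
    · obtain ⟨w, hw, z, rfl⟩ := hx
      rw [h.sw_pre hw, h.sw_pre (h.swW_mk hw), h.swW_swW hw]
      rcases lt_or_ge m w.length with hm | hm
      · rw [pre_lt _ _ hm, pre_lt _ _ hm]
      · have := List.length_pos_of_ne_nil (h.ne_nil w hw)
        rw [pre_ge _ _ hm, pre_ge _ _ hm, ih _ (by omega)]
    · have hx' : ∀ w, Mk w₁ w₂ w → ¬ Starts w x := fun w hw hs => hx ⟨w, hw, hs⟩
      obtain ⟨a, z, rfl⟩ := exists_scons x
      rw [sw_scons hx', sw_scons (h.sw_not_starts hx')]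
      cases m with
      | zero => rfl
      | succ m => exact ih m (by omega) z

lemma Markers.sw_injective (h : Markers w₁ w₂) : Function.Injective (sw w₁ w₂) :=
  Function.Involutive.injective h.sw_sw

/-- A sequence containing no markers is fixed by the swap. -/
lemma sw_fixed {x : Seq n} (h : ∀ k w, Mk w₁ w₂ w → ¬ Starts w (sdrop k x)) :
    sw w₁ w₂ x = x := by
  funext m
  induction m generalizing x with
  | zero =>
    obtain ⟨a, z, rfl⟩ := exists_scons x
    rw [sw_scons (by simpa using h 0)]; rfl
  | succ m ih =>
    obtain ⟨a, z, rfl⟩ := exists_scons x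
    rw [sw_scons (by simpa using h 0)]
    refine ih fun k w hw => ?_
    have := h (1 + k) w hw
    rwa [← sdrop_sdrop, sdrop_scons] at this

/-! ### Transducers realizing marker swaps -/

variable (w₁ w₂) in
/-- Proper prefixes of markers: the possible beginnings of a marker that is not yet complete. -/
def PP (p : Word n) : Prop := ∃ w, Mk w₁ w₂ w ∧ p <+: w ∧ p ≠ w

variable (w₁ w₂) in
open Classical in
/-- The longest suffix of a word which is a proper prefix of a marker. -/
noncomputable def pend : Word n → Word n
  | [] => []
  | d :: v => if PP w₁ w₂ (d :: v) then d :: v else pend v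

variable (w₁ w₂) in
open Classical in
/-- The word written by the swap while reading a word, before the pending part of it. -/
noncomputable def emit : Word n → Word n
  | [] => []
  | d :: v => if PP w₁ w₂ (d :: v) then [] else
      if Mk w₁ w₂ (d :: v) then swW w₁ w₂ (d :: v) else d :: emit v

lemma PP.length_lt {p : Word n} (h : PP w₁ w₂ p) : p.length < max w₁.length w₂.length := by
  obtain ⟨w, hw, hp, hne⟩ := h
  have := hp.length_le
  have : p.length ≠ w.length := fun e => hne (hp.eq_of_length e)
  rcases hw with rfl | rfl <;> omega

lemma PP.prefix {p s : Word n} (h : PP w₁ w₂ p) (hs : s <+: p) : PP w₁ w₂ s := by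
  obtain ⟨w, hw, hp, hne⟩ := h
  refine ⟨w, hw, hs.trans hp, fun e => hne ?_⟩
  subst e
  exact hp.eq_of_length (le_antisymm hp.length_le hs.length_le)

lemma Markers.not_PP_infix (h : Markers w₁ w₂) {w p : Word n} (hw : Mk w₁ w₂ w) (hp : w <:+: p) :
    ¬ PP w₁ w₂ p := by
  rintro ⟨w', hw', hpw, hne⟩
  have e := h.infx _ _ hw hw' (hp.trans hpw.isInfix)
  subst e
  exact hne (hpw.eq_of_length (le_antisymm hpw.length_le hp.length_le))

lemma Markers.PP_nil (h : Markers w₁ w₂) : PP w₁ w₂ [] :=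
  ⟨w₁, Or.inl rfl, List.nil_prefix, (h.ne_nil _ (Or.inl rfl)).symm⟩

lemma Markers.PP_pend (h : Markers w₁ w₂) (v : Word n) : PP w₁ w₂ (pend w₁ w₂ v) := by
  induction v with
  | nil => exact h.PP_nil
  | cons d v ih => unfold pend; split_ifs with hp <;> assumption

lemma pend_of_PP {p : Word n} (h : PP w₁ w₂ p) : pend w₁ w₂ p = p := by
  cases p with
  | nil => rfl
  | cons d p => unfold pend; rw [if_pos h]

lemma pend_pend_append (u v : Word n) :
    pend w₁ w₂ (pend w₁ w₂ u ++ v) = pend w₁ w₂ (u ++ v) := by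
  induction u with
  | nil => rfl
  | cons d u ih =>
    by_cases hp : PP w₁ w₂ (d :: u)
    · rw [pend_of_PP hp]
    · have h1 : pend w₁ w₂ (d :: u) = pend w₁ w₂ u := by rw [pend, if_neg hp]
      have h2 : pend w₁ w₂ (d :: u ++ v) = pend w₁ w₂ (u ++ v) := by
        rw [List.cons_append, pend, if_neg fun h' => hp (h'.prefix ⟨v, rfl⟩)]
      rw [h1, h2, ih]

lemma pend_append_long (u v : Word n) (hv : max w₁.length w₂.length ≤ v.length) :
    pend w₁ w₂ (u ++ v) = pend w₁ w₂ v := by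
  induction u with
  | nil => rfl
  | cons d u ih =>
    rw [List.cons_append, pend, if_neg, ih]
    intro h'
    have := h'.length_lt
    simp at this; omega

lemma pend_eq_nil {v : Word n} (h : ∀ s, s ≠ [] → s <:+ v → ¬ PP w₁ w₂ s) :
    pend w₁ w₂ v = [] := by
  induction v with
  | nil => rfl
  | cons d v ih =>
    rw [pend, if_neg (h _ (by simp) (List.suffix_refl _))]
    exact ih fun s hs hsv => h s hs (hsv.trans (List.suffix_cons _ _))

lemma Markers.pend_marker (h : Markers w₁ w₂) {w : Word n} (hw : Mk w₁ w₂ w) (u : Word n) :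
    pend w₁ w₂ (u ++ w) = [] := by
  induction u with
  | nil =>
    refine pend_eq_nil fun s hs hsw ⟨w', hw', hp, hne⟩ => hne ?_
    exact (h.overlap _ _ s hw' hw hs hp hsw).1
  | cons d u ih =>
    rw [List.cons_append, pend, if_neg (h.not_PP_infix hw ⟨d :: u, [], by simp⟩), ih]

lemma Markers.sw_emit (h : Markers w₁ w₂) (v : Word n)
    (hv : ∀ w, Mk w₁ w₂ w → ∀ s t, v = s ++ w ++ t → t = []) (x : Seq n) :
    sw w₁ w₂ (pre v x) = pre (emit w₁ w₂ v) (sw w₁ w₂ (pre (pend w₁ w₂ v) x)) := by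
  induction v with
  | nil => rfl
  | cons d v ih =>
    by_cases hp : PP w₁ w₂ (d :: v)
    · rw [pend_of_PP hp, emit, if_pos hp]; rfl
    by_cases hm : Mk w₁ w₂ (d :: v)
    · have := h.pend_marker hm []
      rw [List.nil_append] at this
      rw [this, emit, if_neg hp, if_pos hm, h.sw_pre hm]; rfl
    · rw [pend, if_neg hp, emit, if_neg hp, if_neg hm, pre_cons, pre_cons, sw_scons, ih]
      · intro w hw s t e
        exact hv w hw (d :: s) t (by simp [e])
      · intro w hw hs
        rcases hs.comparable ⟨x, (pre_cons d v x).symm⟩ with ⟨t, ht⟩ | hpw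
        · have := hv w hw [] t (by simp [ht])
          subst this
          rw [List.append_nil] at ht
          exact hm (ht ▸ hw)
        · by_cases e : d :: v = w
          · exact hm (e ▸ hw)
          · exact hp ⟨w, hw, hpw, e⟩

/-- The transducer whose states remember the pending part of the input of the swap. -/
noncomputable def swT (h : Markers w₁ w₂) : Transducer n where
  Q := {p : Word n // PP w₁ w₂ p}
  fin := by
    refine Set.Finite.subset (List.finite_toSet (w₁.inits ++ w₂.inits)) ?_
    rintro p ⟨w, hw, hp, -⟩
    rcases hw with rfl | rfl <;> simp [hp]
  ne := ⟨⟨[], h.PP_nil⟩⟩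
  tr := fun c p => ⟨pend w₁ w₂ (p.1 ++ [c]), h.PP_pend _⟩
  out := fun c p => emit w₁ w₂ (p.1 ++ [c])

lemma swT_good (h : Markers w₁ w₂) :
    Good (swT h) ∧ ∀ p : {p : Word n // PP w₁ w₂ p}, hmap (swT h) p = fun x => sw w₁ w₂ (pre p.1 x) := by
  refine good_of_family (T := swT h)
    (g := fun (p : {p : Word n // PP w₁ w₂ p}) x => sw w₁ w₂ (pre p.1 x)) ?_
    fun p => h.sw_injective.comp (pre_injective _)
  rintro ⟨p, hp⟩ c x
  have e : pre p (scons c x) = pre (p ++ [c]) x := by rw [pre_append]; rfl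
  change sw w₁ w₂ (pre p (scons c x)) = pre (emit w₁ w₂ (p ++ [c])) (sw w₁ w₂ (pre (pend _ _ _) x))
  rw [e, h.sw_emit]
  intro w hw s t et
  by_contra ht
  rcases List.eq_nil_or_concat t with rfl | ⟨t, b, rfl⟩
  · exact ht rfl
  · have e2 : p ++ [c] = (s ++ w ++ t) ++ [b] := by rw [et]; simp
    have e3 := (List.append_inj' e2 rfl).1
    exact h.not_PP_infix hw ⟨s, t, e3.symm⟩ hp

lemma swT_dsts (h : Markers w₁ w₂) (v : Word n) (p : {p : Word n // PP w₁ w₂ p}) :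
    (dsts (swT h) v p : {p : Word n // PP w₁ w₂ p}).1 = pend w₁ w₂ (p.1 ++ v) := by
  induction v generalizing p with
  | nil =>
    rw [List.append_nil, pend_of_PP p.2]; rfl
  | cons c v ih =>
    refine (ih ⟨pend w₁ w₂ (p.1 ++ [c]), h.PP_pend _⟩).trans ?_
    rw [pend_pend_append]
    simp

lemma swT_sync (h : Markers w₁ w₂) : SyncAt (swT h) (max w₁.length w₂.length) := by
  intro v hv p q
  apply Subtype.ext
  refine (swT_dsts h v p).trans (Eq.trans ?_ (swT_dsts h v q).symm)
  rw [pend_append_long _ _ hv.ge, pend_append_long _ _ hv.ge]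

lemma swT_core (h : Markers w₁ w₂) :
    CoreState (swT h) (⟨[], h.PP_nil⟩ : {p : Word n // PP w₁ w₂ p}) := by
  have e : dsts (swT h) (List.replicate (max w₁.length w₂.length) 0 ++ w₁)
      (⟨[], h.PP_nil⟩ : {p : Word n // PP w₁ w₂ p})
      = (⟨[], h.PP_nil⟩ : {p : Word n // PP w₁ w₂ p}) := by
    apply Subtype.ext
    refine (swT_dsts h _ _).trans ?_
    rw [← List.append_assoc]
    exact h.pend_marker (Or.inl rfl) _
  have := coreState_dsts (T := swT h) (w := List.replicate (max w₁.length w₂.length) 0 ++ w₁)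
    ((swT_sync h).mono (by simp)) (⟨[], h.PP_nil⟩ : {p : Word n // PP w₁ w₂ p})
  rwa [e] at this

end swap

lemma sdrop_continuous (k : ℕ) : Continuous (sdrop k : Seq n → Seq n) :=
  continuous_pi fun t => continuous_apply (k + t)

lemma pre_continuous (u : Word n) : Continuous (pre u : Seq n → Seq n) := by
  refine continuous_pi fun m => ?_
  rcases lt_or_ge m u.length with h | h
  · simp only [pre_lt u _ h]; exact continuous_const
  · simp only [pre_ge u _ h]; exact continuous_apply _

lemma isClopen_range_pre (u : Word n) : IsClopen (Set.range (pre u : Seq n → Seq n)) := by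
  induction u with
  | nil =>
    have : Set.range (pre ([] : Word n)) = Set.univ := Set.range_eq_univ.2 fun x => ⟨x, rfl⟩
    rw [this]; exact isClopen_univ
  | cons a u ih =>
    have : Set.range (pre (a :: u)) =
        (fun x : Seq n => x 0) ⁻¹' {a} ∩ sdrop 1 ⁻¹' Set.range (pre u) := by
      ext x
      constructor
      · rintro ⟨z, rfl⟩; exact ⟨rfl, z, by simp⟩
      · rintro ⟨h, z, hz⟩
        exact ⟨z, by rw [pre_cons, hz, ← scons_eta x, sdrop_scons, show x 0 = a from h]⟩
    rw [this]
    exact ((isClopen_discrete {a}).preimage (continuous_apply 0)).inter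
      (ih.preimage (sdrop_continuous 1))

/-- If some state of `U` induces an involution, then `U` is its own inverse. -/
lemma mulT_self {U : Transducer n} (hU : Minimal U) (c₀ : U.Q)
    (h : ∀ x, hmap U c₀ (hmap U c₀ x) = x) : OmegaEq (mulT U U) oneT := by
  obtain ⟨hM, hs⟩ := mulT_spec hU.1 hU.1 hU.2.1 hU.2.1
  refine omegaEq_oneT hM.2.2.2.2 fun d => funext ?_
  obtain ⟨q, p, hc, u, hu⟩ := hs d
  obtain ⟨gP, hP⟩ := prodT_good hU.1 hU.1
  obtain ⟨w, hw⟩ := hc.exists_word (c₀, c₀)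
  refine (eq_id_of_pre (w := w) (v := outs (prodT U U) w (c₀, c₀) ++ u) (fun x => ?_)
    (hM.2.2.2.1 d)).2
  have e := hmap_pre gP.1 (c₀, c₀) w x
  rw [hw, hP, hP, Function.comp, h] at e
  rw [pre_append, ← hu]
  exact e

/-- Marker swaps are realized by elements of `O_n`. -/
lemma exists_swap {w₁ w₂ : Word n} (h : Markers w₁ w₂) :
    ∃ U : Transducer n, OnMem U ∧ ∃ c, hmap U c = sw w₁ w₂ := by
  obtain ⟨gP, hP⟩ := swT_good h
  obtain ⟨hM, h2, h3⟩ := minRep_spec gP ⟨_, swT_sync h⟩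
  have hroot : hmap (swT h) (⟨[], h.PP_nil⟩ : {p : Word n // PP w₁ w₂ p}) = sw w₁ w₂ := hP _
  obtain ⟨c, u, hc⟩ := h3 _ (swT_core h)
  have hc' : ∀ x, sw w₁ w₂ x = pre u (hmap (minRep (swT h)) c x) := fun x => by
    rw [← hc, hroot]
  have hu : u = [] := by
    obtain ⟨x, y, hxy⟩ := hM.2.2.2.1 c
    have := (eq_id_of_pre (w := []) (v := u) (k := fun x => hmap (minRep (swT h)) c (sw w₁ w₂ x))
      (fun x => by rw [← hc', h.sw_sw]; rfl)
      ⟨sw w₁ w₂ x, sw w₁ w₂ y, by simpa only [h.sw_sw] using hxy⟩).1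
    simpa using this
  subst hu
  have hc0 : hmap (minRep (swT h)) c = sw w₁ w₂ := funext fun x => (hc' x).symm
  have hcont : Continuous (sw w₁ w₂) := by rw [← hroot]; exact hmap_continuous gP.1 _
  have hSO : SOnMem (minRep (swT h)) := by
    refine ⟨⟨hM.1.1, hM.2.1, hM.2.2.1, Or.inl hM.2.2.2⟩, fun d => ⟨hM.1.2 d, ?_⟩⟩
    obtain ⟨q, -, v, hv⟩ := h2 d
    change {p : Word n // PP w₁ w₂ p} at q
    have e : Set.range (hmap (minRep (swT h)) d)
        = (fun z => sw w₁ w₂ (pre v z)) ⁻¹' Set.range (pre q.1) := by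
      ext z
      constructor
      · rintro ⟨x, rfl⟩
        refine ⟨x, ?_⟩
        have := hv x
        rw [hP] at this
        simp only [← this, h.sw_sw]
      · rintro ⟨x, hx⟩
        refine ⟨x, pre_inj (w := v) ?_⟩
        rw [← hv, hP]
        simp only [hx, h.sw_sw]
    rw [e]
    exact (isClopen_range_pre _).preimage (hcont.comp (pre_continuous v))
  have hinv := mulT_self hM c (by rw [hc0]; exact h.sw_sw)
  exact ⟨_, ⟨hSO, _, hSO, hinv, hinv⟩, c, hc0⟩

/-! ### The signature -/

open Classical in
/-- The number modulo `n + 1` of cylinders of words of length `N` meeting a set; this is of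
interest when the set is a union of such cylinders. -/
noncomputable def val : ℕ → Set (Seq n) → ZMod (n + 1)
  | 0, C => if C.Nonempty then 1 else 0
  | N + 1, C => ∑ a : A n, val N (Set.preimage (scons a) C)

/-- The set is a union of cylinders of words of length `N`. -/
def Det : ℕ → Set (Seq n) → Prop
  | 0, C => C = ∅ ∨ C = Set.univ
  | N + 1, C => ∀ a : A n, Det N (scons a ⁻¹' C)

lemma val_empty (N : ℕ) : val N (∅ : Set (Seq n)) = 0 := by
  induction N with
  | zero => simp [val]
  | succ N ih => simp [val, ih]

lemma sum_one_letters : (∑ _a : A n, (1 : ZMod (n + 1))) = 1 := by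
  have : ((n + 1 : ℕ) : ZMod (n + 1)) = 0 := ZMod.natCast_self _
  simp only [Finset.sum_const, Finset.card_univ, Fintype.card_fin, nsmul_eq_mul, mul_one]
  push_cast at this ⊢
  linear_combination this

lemma val_univ (N : ℕ) : val N (Set.univ : Set (Seq n)) = 1 := by
  induction N with
  | zero => simp [val]
  | succ N ih => simp only [val, Set.preimage_univ, ih, sum_one_letters]

lemma Det.succ {N : ℕ} {C : Set (Seq n)} (h : Det N C) :
    Det (N + 1) C ∧ val (N + 1) C = val N C := by
  induction N generalizing C with
  | zero =>
    rcases h with rfl | rfl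
    · exact ⟨fun a => Or.inl (by simp), by rw [val_empty, val_empty]⟩
    · exact ⟨fun a => Or.inr (by simp), by rw [val_univ, val_univ]⟩
  | succ N ih =>
    exact ⟨fun a => (ih (h a)).1, Finset.sum_congr rfl fun a _ => (ih (h a)).2⟩

lemma Det.mono {N M : ℕ} {C : Set (Seq n)} (h : Det N C) (hM : N ≤ M) :
    Det M C ∧ val M C = val N C := by
  induction M, hM using Nat.le_induction with
  | base => exact ⟨h, rfl⟩
  | succ M _ ih => exact ⟨ih.1.succ.1, ih.1.succ.2.trans ih.2⟩

lemma Det.union {N : ℕ} {C D : Set (Seq n)} (hC : Det N C) (hD : Det N D)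
    (h : ∀ x ∈ C, x ∉ D) : Det N (C ∪ D) ∧ val N (C ∪ D) = val N C + val N D := by
  induction N generalizing C D with
  | zero =>
    rcases hC with rfl | rfl
    · rw [Set.empty_union, val_empty, zero_add]
      exact ⟨hD, rfl⟩
    · rcases hD with rfl | rfl
      · rw [Set.union_empty, val_empty, add_zero]
        exact ⟨Or.inr rfl, rfl⟩
      · exact absurd (Set.mem_univ _) (h (fun _ => 0) (Set.mem_univ _))
  | succ N ih =>
    have := fun a => ih (hC a) (hD a) fun x hx hx' => h _ hx hx'
    refine ⟨fun a => (this a).1, ?_⟩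
    simp only [val, Set.preimage_union, (this _).2, Finset.sum_add_distrib]

lemma Det.image_pre {N : ℕ} {C : Set (Seq n)} (h : Det N C) (u : Word n) :
    Det (N + u.length) (pre u '' C) ∧ val (N + u.length) (pre u '' C) = val N C := by
  induction u with
  | nil =>
    have : pre ([] : Word n) '' C = C := Set.image_id C
    rw [this]; exact ⟨h, rfl⟩
  | cons a u ih =>
    have h1 : scons a ⁻¹' (pre (a :: u) '' C) = pre u '' C := by
      ext x
      constructor
      · rintro ⟨z, hz, e⟩; exact ⟨z, hz, (scons_inj e).2⟩
      · rintro ⟨z, hz, rfl⟩; exact ⟨z, hz, rfl⟩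
    have h2 : ∀ b, b ≠ a → scons b ⁻¹' (pre (a :: u) '' C) = ∅ := by
      intro b hb
      ext x
      simp only [Set.mem_preimage, Set.mem_empty_iff_false, iff_false]
      rintro ⟨z, hz, e⟩
      exact hb (scons_inj e).1.symm
    constructor
    · intro b
      change Det (N + u.length) _
      by_cases hb : b = a
      · subst hb; rw [h1]; exact ih.1
      · rw [h2 b hb]
        exact ((show Det 0 (∅ : Set (Seq n)) from Or.inl rfl).mono (Nat.zero_le _)).1
    · change ∑ b, val (N + u.length) (scons b ⁻¹' (pre (a :: u) '' C)) = _
      rw [Finset.sum_eq_single a, h1, ih.2]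
      · intro b _ hb
        rw [h2 b hb, val_empty]
      · simp

lemma Det.of_stake {N : ℕ} {C : Set (Seq n)}
    (h : ∀ x y, stake N x = stake N y → x ∈ C → y ∈ C) : Det N C := by
  induction N generalizing C with
  | zero =>
    rcases C.eq_empty_or_nonempty with rfl | ⟨x, hx⟩
    · exact Or.inl rfl
    · exact Or.inr (Set.eq_univ_of_forall fun y => h x y rfl hx)
  | succ N ih =>
    intro a
    refine ih fun x y hxy hx => h (scons a x) (scons a y) ?_ hx
    simp [hxy]

lemma exists_stake_of_isOpen {C : Set (Seq n)} (hC : IsOpen C) {x : Seq n} (hx : x ∈ C) :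
    ∃ K, ∀ y, stake K y = stake K x → y ∈ C := by
  obtain ⟨I, u, hu, hI⟩ := isOpen_pi_iff.1 hC x hx
  refine ⟨I.sup id + 1, fun y hy => hI fun i hi => ?_⟩
  have hi' : i ≤ I.sup id := Finset.le_sup (f := id) hi
  rw [stake_eq_iff.1 hy i (by omega)]
  exact (hu i hi).2

lemma isOpen_stake (K : ℕ) (x : Seq n) : IsOpen {y : Seq n | stake K y = stake K x} := by
  have : {y : Seq n | stake K y = stake K x} = Set.range (pre (stake K x)) := by
    ext y
    have := starts_iff (v := stake K x) (x := y)
    rw [stake_length] at this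
    refine Iff.trans this.symm ?_
    exact exists_congr fun z => eq_comm
  rw [this]
  exact (isClopen_range_pre _).2

lemma exists_det {C : Set (Seq n)} (hC : IsClopen C) : ∃ N, Det N C := by
  have h : ∀ x : Seq n, ∃ K, ∀ y, stake K y = stake K x → (y ∈ C ↔ x ∈ C) := by
    intro x
    by_cases hx : x ∈ C
    · obtain ⟨K, hK⟩ := exists_stake_of_isOpen hC.2 hx
      exact ⟨K, fun y hy => ⟨fun _ => hx, fun _ => hK y hy⟩⟩
    · obtain ⟨K, hK⟩ := exists_stake_of_isOpen hC.compl.2 (x := x) hx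
      exact ⟨K, fun y hy => ⟨fun h => absurd h (hK y hy), fun h => absurd h hx⟩⟩
  choose K hK using h
  obtain ⟨t, -, ht⟩ := isCompact_univ.elim_nhds_subcover
    (fun x : Seq n => {y | stake (K x) y = stake (K x) x})
    fun x _ => (isOpen_stake (K x) x).mem_nhds rfl
  refine ⟨t.sup K, Det.of_stake fun x y hxy hx => ?_⟩
  obtain ⟨z, hz, hxz⟩ := Set.mem_iUnion₂.1 (ht (Set.mem_univ x))
  have hxz : stake (K z) x = stake (K z) z := hxz
  have hle : K z ≤ t.sup K := Finset.le_sup hz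
  have hyz : stake (K z) y = stake (K z) z := by
    rw [← hxz, stake_eq_iff]
    exact fun s hs => (stake_eq_iff.1 hxy s (by omega)).symm
  exact (hK z y hyz).2 ((hK z x hxz).1 hx)

/-- The set is clopen, and the number of cylinders in a partition of it into cylinders is `v`
modulo `n + 1`. -/
def HasVal (C : Set (Seq n)) (v : ZMod (n + 1)) : Prop :=
  ∃ N, ∀ M, N ≤ M → Det M C ∧ val M C = v

lemma Det.hasVal {N : ℕ} {C : Set (Seq n)} (h : Det N C) : HasVal C (val N C) :=
  ⟨N, fun _ hM => h.mono hM⟩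

lemma HasVal.unique {C : Set (Seq n)} {v v' : ZMod (n + 1)} (h : HasVal C v)
    (h' : HasVal C v') : v = v' := by
  obtain ⟨N, hN⟩ := h
  obtain ⟨N', hN'⟩ := h'
  rw [← (hN (max N N') (le_max_left _ _)).2, (hN' (max N N') (le_max_right _ _)).2]

lemma hasVal_univ : HasVal (Set.univ : Set (Seq n)) 1 :=
  val_univ (n := n) 0 ▸ Det.hasVal (N := 0) (Or.inr rfl)

lemma hasVal_empty : HasVal (∅ : Set (Seq n)) 0 :=
  val_empty (n := n) 0 ▸ Det.hasVal (N := 0) (Or.inl rfl)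

lemma HasVal.union {C D : Set (Seq n)} {v w : ZMod (n + 1)} (hC : HasVal C v) (hD : HasVal D w)
    (h : ∀ x ∈ C, x ∉ D) : HasVal (C ∪ D) (v + w) := by
  obtain ⟨N, hN⟩ := hC
  obtain ⟨N', hN'⟩ := hD
  refine ⟨max N N', fun M hM => ?_⟩
  obtain ⟨h1, rfl⟩ := hN M (le_trans (le_max_left _ _) hM)
  obtain ⟨h2, rfl⟩ := hN' M (le_trans (le_max_right _ _) hM)
  exact h1.union h2 h

lemma HasVal.image_pre {C : Set (Seq n)} {v : ZMod (n + 1)} (h : HasVal C v) (u : Word n) :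
    HasVal (pre u '' C) v := by
  obtain ⟨N, hN⟩ := h
  obtain ⟨h1, rfl⟩ := hN N le_rfl
  obtain ⟨h2, h3⟩ := h1.image_pre u
  exact h3 ▸ h2.hasVal

lemma HasVal.biUnion {ι : Type} (s : Finset ι) (C : ι → Set (Seq n)) (v : ι → ZMod (n + 1))
    (h : ∀ i ∈ s, HasVal (C i) (v i))
    (hd : ∀ i ∈ s, ∀ j ∈ s, i ≠ j → ∀ x ∈ C i, x ∉ C j) :
    HasVal (⋃ i ∈ s, C i) (∑ i ∈ s, v i) := by
  classical
  induction s using Finset.induction_on with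
  | empty => simpa using hasVal_empty
  | insert i s hi ih =>
    rw [Finset.sum_insert hi, Finset.set_biUnion_insert]
    refine (h i (by simp)).union (ih (fun j hj => h j (by simp [hj])) fun j hj k hk =>
      hd j (by simp [hj]) k (by simp [hk])) ?_
    intro x hx hx'
    obtain ⟨j, hj, hxj⟩ := Set.mem_iUnion₂.1 hx'
    exact hd i (by simp) j (by simp [hj]) (fun e => hi (e ▸ hj)) x hx hxj

lemma cyl_eq (ν : Word n) : Cyl ν = pre ν '' Set.univ := by
  ext x
  rw [Set.image_univ]
  constructor
  · intro h
    refine ⟨sdrop ν.length x, ?_⟩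
    funext m
    rcases lt_or_ge m ν.length with hm | hm
    · rw [pre_lt _ _ hm, h m hm]
      simp [List.getD, hm]
    · rw [pre_ge _ _ hm, sdrop, Nat.add_sub_cancel' hm]
  · rintro ⟨z, rfl⟩ j hj
    rw [pre_lt _ _ hj]
    simp [List.getD, hj]

lemma mem_cyl {ν : Word n} {x : Seq n} : x ∈ Cyl ν ↔ Starts ν x := by
  rw [cyl_eq, Set.image_univ]
  exact exists_congr fun z => eq_comm

lemma Det.exists_cover {N : ℕ} {C : Set (Seq n)} (h : Det N C) :
    ∃ S : Finset (Word n), (⋃ ν ∈ S, Cyl ν) = C := by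
  classical
  induction N generalizing C with
  | zero =>
    rcases h with rfl | rfl
    · exact ⟨∅, by simp⟩
    · refine ⟨{[]}, ?_⟩
      rw [Finset.set_biUnion_singleton]
      exact Set.eq_univ_of_forall fun x => mem_cyl.2 ⟨x, rfl⟩
  | succ N ih =>
    choose S hS using fun a => ih (h a)
    refine ⟨Finset.univ.biUnion fun a => (S a).image (List.cons a), ?_⟩
    ext x
    have hx : x ∈ C ↔ sdrop 1 x ∈ scons (x 0) ⁻¹' C := by rw [Set.mem_preimage, scons_eta]
    rw [hx, ← hS]
    simp only [Set.mem_iUnion, mem_cyl, Finset.mem_biUnion, Finset.mem_image, Finset.mem_univ,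
      true_and, exists_prop]
    constructor
    · rintro ⟨_, ⟨a, ν, hν, rfl⟩, hs⟩
      obtain ⟨rfl, hs'⟩ := starts_cons.1 hs
      exact ⟨ν, hν, hs'⟩
    · rintro ⟨ν, hν, hs⟩
      exact ⟨_, ⟨x 0, ν, hν, rfl⟩, starts_cons.2 ⟨rfl, hs⟩⟩

/-- The cardinality of a smallest set of cylinders covering the image of a state is the value
of that image: in a smallest cover the cylinders are disjoint. -/
lemma mq_eq {T : Transducer n} {q : T.Q} {v : ZMod (n + 1)}
    (h : HasVal (Set.range (hmap T q)) v) : (mq T q : ZMod (n + 1)) = v := by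
  classical
  obtain ⟨N, hN⟩ := h
  have hmem : mq T q ∈ {m : ℕ | ∃ S : Finset (Word n), S.card = m ∧
      (∀ ν ∈ S, Cyl ν ⊆ Set.range (hmap T q)) ∧
      (⋃ ν ∈ S, Cyl ν) = Set.range (hmap T q)} := by
    refine Nat.sInf_mem ?_
    obtain ⟨S, hS⟩ := (hN N le_rfl).1.exists_cover
    exact ⟨S.card, S, rfl, fun ν hν => hS ▸ Set.subset_biUnion_of_mem (u := fun ν => Cyl ν) hν, hS⟩
  obtain ⟨S, hcard, hsub, hS⟩ := hmem
  have hanti : ∀ ν ∈ S, ∀ ν' ∈ S, ν ≠ ν' → ¬ ν <+: ν' := by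
    rintro ν hν ν' hν' hne ⟨t, ht⟩
    have hle : mq T q ≤ (S.erase ν').card := by
      refine Nat.sInf_le ⟨S.erase ν', rfl, fun μ hμ => hsub μ (Finset.mem_of_mem_erase hμ), ?_⟩
      rw [← hS]
      refine Set.Subset.antisymm
        (Set.biUnion_subset_biUnion_left fun μ hμ => Finset.mem_of_mem_erase hμ) ?_
      refine Set.iUnion₂_subset fun μ hμ x hx => ?_
      by_cases e : μ = ν'
      · subst e
        refine Set.mem_iUnion₂.2 ⟨ν, Finset.mem_erase.2 ⟨hne, hν⟩, ?_⟩
        obtain ⟨z, rfl⟩ := mem_cyl.1 hx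
        exact mem_cyl.2 ⟨pre t z, by rw [← pre_append, ht]⟩
      · exact Set.mem_iUnion₂.2 ⟨μ, Finset.mem_erase.2 ⟨e, hμ⟩, hx⟩
    have := Finset.card_erase_lt_of_mem hν'
    omega
  have hv : HasVal (⋃ ν ∈ S, Cyl ν) (∑ ν ∈ S, 1) := by
    refine HasVal.biUnion S _ _ (fun ν _ => ?_) fun ν hν ν' hν' hne x hx hx' => ?_
    · rw [cyl_eq]; exact hasVal_univ.image_pre ν
    · rcases (mem_cyl.1 hx).comparable (mem_cyl.1 hx') with h | h
      · exact hanti ν hν ν' hν' hne h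
      · exact hanti ν' hν' ν hν hne.symm h
  rw [hS] at hv
  rw [← hcard, ← HasVal.unique hv ⟨N, hN⟩]
  simp

/-- The residue of `m_q` does not depend on the state `q`, so that it is `1` as soon as one
state is surjective. -/
lemma sigT_eq_one {T : Transducer n} (hT : SOnMem T) {c : T.Q}
    (hc : Function.Surjective (hmap T c)) : sigT T = 1 := by
  have hG := hT.minimal.1
  have hex : ∀ q : T.Q, ∃ v, HasVal (Set.range (hmap T q)) v := fun q => by
    obtain ⟨N, hN⟩ := exists_det (hT.2 q).2
    exact ⟨_, hN.hasVal⟩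
  choose V hV using hex
  have hrec : ∀ q, V q = ∑ a, V (T.tr a q) := by
    intro q
    have e : Set.range (hmap T q)
        = ⋃ a ∈ (Finset.univ : Finset (A n)), pre (T.out a q) '' Set.range (hmap T (T.tr a q)) := by
      ext y
      simp only [Finset.mem_univ, Set.iUnion_true, Set.mem_iUnion]
      constructor
      · rintro ⟨x, rfl⟩
        refine ⟨x 0, hmap T (T.tr (x 0) q) (sdrop 1 x), ⟨_, rfl⟩, ?_⟩
        rw [← hmap_scons hG.1, scons_eta]
      · rintro ⟨a, _, ⟨x, rfl⟩, rfl⟩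
        exact ⟨scons a x, hmap_scons hG.1 _ _ _⟩
    refine (hV q).unique ?_
    rw [e]
    refine HasVal.biUnion _ _ _ (fun a _ => (hV _).image_pre _) ?_
    rintro a - b - hab _ ⟨_, ⟨x, rfl⟩, rfl⟩ ⟨_, ⟨y, rfl⟩, h⟩
    rw [← hmap_scons hG.1, ← hmap_scons hG.1] at h
    exact hab (scons_inj (hG.2 q h)).1.symm
  have hconst : ∀ k, ∀ q p : T.Q, (∀ w : Word n, w.length = k → dsts T w q = dsts T w p) →
      V q = V p := by
    intro k
    induction k with
    | zero => intro q p h; exact congrArg V (h [] rfl)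
    | succ k ih =>
      intro q p h
      rw [hrec, hrec]
      exact Finset.sum_congr rfl fun a _ => ih _ _ fun w hw => h (a :: w) (by simp [hw])
  obtain ⟨k, hk⟩ := hT.minimal.2.1
  rw [sigT, mq_eq (hV _), hconst k _ c fun w hw => hk w hw _ _]
  refine (hV c).unique ?_
  rw [hc.range_eq]
  exact hasVal_univ

/-! ### Periodic sequences and unbordered words -/

/-- The periodic sequence `w w w …`; junk for the empty word. -/
def per (w : Word n) : Seq n := fun t => w.getD (t % w.length) default

lemma pre_per (w : Word n) : pre w (per w) = per w := by
  funext m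
  rcases lt_or_ge m w.length with h | h
  · rw [pre_lt _ _ h, per, Nat.mod_eq_of_lt h]
  · rw [pre_ge _ _ h, per, per, Nat.mod_eq_sub_mod h]

lemma eq_per {w : Word n} (hw : w ≠ []) {x : Seq n} (h : x = pre w x) : x = per w := by
  have hl := List.length_pos_of_ne_nil hw
  funext m
  induction m using Nat.strong_induction_on with
  | _ m ih =>
    rw [h, ← pre_per]
    rcases lt_or_ge m w.length with hm | hm
    · rw [pre_lt _ _ hm, pre_lt _ _ hm]
    · rw [pre_ge _ _ hm, pre_ge _ _ hm, ih _ (by omega)]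

lemma sdrop_per (w : Word n) : sdrop w.length (per w) = per w := by
  conv_lhs => rw [← pre_per w]
  rw [sdrop_pre]

lemma eq_per_stake {m : ℕ} (hm : 0 < m) {x : Seq n} (h : sdrop m x = x) :
    x = per (stake m x) := by
  refine eq_per (fun e => ?_) ?_
  · have := congrArg List.length e
    simp at this; omega
  · conv_lhs => rw [← pre_stake m x, h]

lemma sdrop_comm (j k : ℕ) (x : Seq n) : sdrop j (sdrop k x) = sdrop k (sdrop j x) := by
  rw [sdrop_sdrop, sdrop_sdrop, add_comm]

lemma sdrop_mul {m : ℕ} {x : Seq n} (h : sdrop m x = x) (c : ℕ) : sdrop (c * m) x = x := by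
  induction c with
  | zero => simp
  | succ c ih => rw [Nat.succ_mul, ← sdrop_sdrop, ih, h]

/-- An unbordered word: no proper nonempty prefix is a suffix. -/
def Unb (w : Word n) : Prop := ∀ s, s ≠ [] → s <+: w → s <:+ w → s = w

/-- An unbordered word occurring in a periodic sequence is not longer than the period. -/
lemma Unb.length_le {w : Word n} (hw : Unb w) {m : ℕ} (hm : 0 < m) {x : Seq n}
    (hx : sdrop m x = x) {k : ℕ} (hk : Starts w (sdrop k x)) : w.length ≤ m := by
  by_contra! hl
  obtain ⟨d, hd⟩ := Nat.exists_eq_add_of_lt hl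
  have hy : sdrop m (sdrop k x) = sdrop k x := by rw [sdrop_comm, hx]
  rw [starts_iff] at hk
  generalize sdrop k x = y at *
  have h1 : stake (d + 1) y <+: w := ⟨stake m (sdrop (d + 1) y), by
    rw [← stake_add, ← hk, hd]; congr 1; omega⟩
  have h2 : stake (d + 1) y <:+ w := ⟨stake m y, by
    nth_rewrite 2 [← hy]
    rw [← stake_add, ← hk, hd, add_assoc]⟩
  have := congrArg List.length (hw _ (fun e => by simpa using congrArg List.length e) h1 h2)
  simp at this
  omega

lemma append_lt_append_of_lt {u v : Word n} (h : u < v) (hl : u.length = v.length) (s t : Word n) :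
    u ++ s < v ++ t := by
  induction u generalizing v with
  | nil =>
    have : v = [] := List.length_eq_zero_iff.1 hl.symm
    subst this
    exact absurd h (lt_irrefl _)
  | cons a u ih =>
    cases v with
    | nil => simp at hl
    | cons b v =>
      rw [List.cons_lt_cons_iff] at h
      rw [List.cons_append, List.cons_append, List.cons_lt_cons_iff]
      rcases h with h | ⟨h, h'⟩
      · exact Or.inl h
      · exact Or.inr ⟨h, ih h' (by simpa using hl)⟩

lemma lt_of_append_lt {s u v : Word n} (h : u < v) : s ++ u < s ++ v := by
  induction s with
  | nil => exact h
  | cons a s ih =>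
    rw [List.cons_append, List.cons_append, List.cons_lt_cons_iff]
    exact Or.inr ⟨rfl, ih⟩

/-- Every periodic sequence is tail equivalent to one with an unbordered period: among the
windows of the length of the least period take the lexicographically least one. -/
lemma exists_unb {η : Word n} (hη : η ≠ []) : ∃ δ, δ ≠ [] ∧ Unb δ ∧ TailEq (per η) (per δ) := by
  classical
  have hex : ∃ m, 0 < m ∧ sdrop m (per η) = per η :=
    ⟨_, List.length_pos_of_ne_nil hη, sdrop_per η⟩
  obtain ⟨hm, hper⟩ := Nat.find_spec hex
  have hmin := fun m' h => Nat.find_min' hex (m := m') h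
  generalize Nat.find hex = m at *
  generalize per η = z at *
  obtain ⟨t, -, ht⟩ := Finset.exists_min_image (Finset.range m)
    (fun t => stake m (sdrop t z)) ⟨0, Finset.mem_range.2 hm⟩
  have hy : sdrop m (sdrop t z) = sdrop t z := by rw [sdrop_comm, hper]
  have hz : z = sdrop (m * t - t) (sdrop t z) := by
    rw [sdrop_sdrop, Nat.add_sub_cancel' (Nat.le_mul_of_pos_left t hm), mul_comm, sdrop_mul hper]
  have hle : ∀ j, stake m (sdrop t z) ≤ stake m (sdrop j (sdrop t z)) := by
    intro j
    have e : sdrop j (sdrop t z) = sdrop ((t + j) % m) z := by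
      have e' : t + j = (t + j) / m * m + (t + j) % m := (Nat.div_add_mod' (t + j) m).symm
      rw [sdrop_sdrop]
      conv_lhs => rw [e', ← sdrop_sdrop, sdrop_mul hper]
    rw [e]
    exact ht _ (Finset.mem_range.2 (Nat.mod_lt _ hm))
  have hmin' : ∀ d, 0 < d → sdrop d (sdrop t z) = sdrop t z → m ≤ d := by
    intro d hd h
    refine hmin d ⟨hd, ?_⟩
    rw [hz, sdrop_comm, h]
  have htail : TailEq z (sdrop t z) := ⟨t, 0, by simp⟩
  generalize sdrop t z = y at *
  refine ⟨stake m y, fun e => ?_, ?_, ?_⟩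
  · have := congrArg List.length e
    simp at this; omega
  · intro s hs hp hsuf
    by_contra hne
    have hpos := List.length_pos_of_ne_nil hs
    have hd : s.length < m := by
      have h1 := hp.length_le
      have h2 : s.length ≠ (stake m y).length := fun e => hne (hp.eq_of_length e)
      rw [stake_length] at h1 h2
      omega
    obtain ⟨v, hv⟩ := hp
    obtain ⟨v', hv'⟩ := hsuf
    have lv : v.length = m - s.length := by
      have := congrArg List.length hv; simp at this; omega
    have lv' : v'.length = m - s.length := by
      have := congrArg List.length hv'; simp at this; omega
    -- `y = s v s v …` and `y = v' s v' s …`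
    have ey : y = pre s (pre v y) := by
      rw [← pre_append, hv]; conv_lhs => rw [← pre_stake m y, hy]
    have ey' : y = pre v' (pre s y) := by
      rw [← pre_append, hv']; conv_lhs => rw [← pre_stake m y, hy]
    have r1 : stake m (sdrop s.length y) = v ++ s := by
      have : sdrop s.length y = pre (v ++ s) (pre v y) := by
        conv_lhs => rw [ey, sdrop_pre]
        rw [pre_append, ← ey]
      rw [this]
      have l : m = (v ++ s).length := by simp; omega
      conv_lhs => rw [l]
      exact stake_pre _ _
    have r2 : stake m (sdrop v'.length y) = s ++ v' := by
      have : sdrop v'.length y = pre (s ++ v') (pre s y) := by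
        conv_lhs => rw [ey', sdrop_pre]
        rw [pre_append, ← ey']
      rw [this]
      have l : m = (s ++ v').length := by simp; omega
      conv_lhs => rw [l]
      exact stake_pre _ _
    have h1 : v' ≤ v := by
      by_contra! hlt
      have := hle s.length
      rw [r1, ← hv'] at this
      exact absurd (append_lt_append_of_lt hlt (by omega) s s) (not_lt.2 this)
    have h2 : v ≤ v' := by
      by_contra! hlt
      have := hle v'.length
      rw [r2, ← hv] at this
      exact absurd (lt_of_append_lt (s := s) hlt) (not_lt.2 this)
    have hvv : v = v' := le_antisymm h2 h1
    subst hvv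
    have : sdrop s.length y = y := by
      have hm' : sdrop m (sdrop s.length y) = sdrop s.length y := by rw [sdrop_comm, hy]
      rw [eq_per_stake hm hm', r1, hv', ← eq_per_stake hm hy]
    have := hmin' _ hpos this
    omega
  · rwa [← eq_per_stake hm hy]

lemma suffix_getD {u v : Word n} (h : u <:+ v) (m : ℕ) :
    u.getD m default = v.getD (v.length - u.length + m) default := by
  obtain ⟨t, rfl⟩ := h
  simp only [List.getD, List.length_append, Nat.add_sub_cancel]
  rw [List.getElem?_append_right (by omega), Nat.add_sub_cancel_left]

lemma infix_getD {u v : Word n} (h : u <:+: v) :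
    ∃ k, k + u.length ≤ v.length ∧ ∀ m < u.length, u.getD m default = v.getD (k + m) default := by
  obtain ⟨s, t, rfl⟩ := h
  refine ⟨s.length, by simp, fun m hm => ?_⟩
  rw [List.append_assoc]
  simp only [List.getD]
  rw [List.getElem?_append_right (by omega), Nat.add_sub_cancel_left,
    List.getElem?_append_left hm]

/-- The word `a^L b^L`. -/
def step (a b : A n) (L : ℕ) : Word n := List.replicate L a ++ List.replicate L b

lemma step_length (a b : A n) (L : ℕ) : (step a b L).length = L + L := by simp [step]

lemma step_lt (a b : A n) {L i : ℕ} (h : i < L) : (step a b L).getD i default = a := by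
  simp [step, List.getD, List.getElem?_append_left, h]

lemma step_ge (a b : A n) {L i : ℕ} (h : L ≤ i) (h' : i < L + L) :
    (step a b L).getD i default = b := by
  have : i - L < L := by omega
  simp [step, List.getD, List.getElem?_append_right, h, this]

lemma step_unb {a b : A n} (hab : a ≠ b) (L : ℕ) : Unb (step a b L) := by
  intro s hs hp hsuf
  by_contra hne
  have hpos := List.length_pos_of_ne_nil hs
  have h1 := hp.length_le
  have h2 : s.length ≠ (step a b L).length := fun e => hne (hp.eq_of_length e)
  rw [step_length] at h1 h2
  have e1 := getD_of_prefix hp (m := s.length - L) (by omega)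
  rw [suffix_getD hsuf, step_lt _ _ (by omega), step_length,
    step_ge _ _ (by omega) (by omega)] at e1
  exact hab e1

/-- An unbordered word and the word `a^L b^L` formed by its extreme letters are a pair of
markers. -/
lemma unb_markers {w : Word n} {a b : A n} {L : ℕ} (hw : Unb w) (hl : 2 ≤ w.length)
    (ha : w.getD 0 default = a) (hb : w.getD (w.length - 1) default = b) (hL : w.length ≤ L)
    (hinf : ¬ w <:+: step a b L) : Markers w (step a b L) ∧ a ≠ b := by
  have hw0 : w ≠ [] := fun e => by simp [e] at hl
  have hab : a ≠ b := by
    rintro rfl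
    have hp : w.take 1 <+: w := List.take_prefix _ _
    have hs : w.drop (w.length - 1) <:+ w := List.drop_suffix _ _
    have e : w.take 1 = w.drop (w.length - 1) := by
      apply List.ext_getElem
      · simp; omega
      · intro i h1 h2
        simp at h1
        have : i = 0 := by omega
        subst this
        rw [← hb] at ha
        have h3 : w.length - 1 < w.length := by omega
        have h4 : 0 < w.length := by omega
        simpa [List.getD, h3, h4] using ha
    have := congrArg List.length (hw _ (by simp [hw0]) hp (e ▸ hs))
    simp at this; omega
  have hne : w ≠ step a b L := fun e => by
    have := congrArg List.length e
    rw [step_length] at this; omega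
  refine ⟨⟨?_, ?_, ?_, hne⟩, hab⟩
  · rintro v (rfl | rfl)
    · exact hw0
    · intro e
      have := congrArg List.length e
      rw [step_length] at this; simp at this; omega
  · rintro v v' s (rfl | rfl) (rfl | rfl) hs hp hsuf
    · have := hw s hs hp hsuf; exact ⟨this, this⟩
    · exfalso
      have hpos := List.length_pos_of_ne_nil hs
      have h1 := hp.length_le
      have e := getD_of_prefix hp (m := 0) hpos
      rw [suffix_getD hsuf, ha, step_length, step_ge _ _ (by omega) (by omega)] at e
      exact hab e
    · exfalso
      have hpos := List.length_pos_of_ne_nil hs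
      have h1 := hsuf.length_le
      have e := getD_of_prefix hp (m := s.length - 1) (by omega)
      rw [suffix_getD hsuf, step_lt _ _ (by omega),
        show v'.length - s.length + (s.length - 1) = v'.length - 1 by omega, hb] at e
      exact hab e
    · have := step_unb hab L s hs hp hsuf; exact ⟨this, this⟩
  · rintro v v' (rfl | rfl) (rfl | rfl) h
    · rfl
    · exact absurd h hinf
    · have := h.length_le
      rw [step_length] at this; omega
    · rfl

lemma sw_tail {w₁ w₂ : Word n} (h : Markers w₁ w₂) {x y : Seq n} (hxy : TailEq x y) :
    TailEq (sw w₁ w₂ x) (sw w₁ w₂ y) := by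
  obtain ⟨U, hU, c, hc⟩ := exists_swap h
  rw [← hc]
  exact hmap_tail hU.1.minimal.1.1 hU.1.minimal.2.1 c c hxy

lemma not_tail_per {w v : Word n} (hw : w ≠ []) (hv : Unb v) (hl : w.length < v.length) :
    ¬ TailEq (per v) (per w) := by
  rintro ⟨i, j, h⟩
  have hl0 := List.length_pos_of_ne_nil hw
  have e : sdrop (i * v.length - i + j) (per w) = per v := by
    rw [add_comm, ← sdrop_sdrop, ← h, sdrop_sdrop,
      Nat.add_sub_cancel' (Nat.le_mul_of_pos_right i (by omega)), sdrop_mul (sdrop_per v)]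
  have := hv.length_le (k := i * v.length - i + j) hl0 (sdrop_per w)
    ⟨per v, by rw [e, pre_per]⟩
  omega

/-- The swap of an unbordered word `w` with `a^L b^L` moves the class of `per w`. -/
lemma sw_moves {w : Word n} {a b : A n} {L : ℕ} (hw : w ≠ []) (hL : w.length ≤ L)
    (h : Markers w (step a b L) ∧ a ≠ b) :
    sw w (step a b L) (per w) = per (step a b L) ∧ ¬ TailEq (per (step a b L)) (per w) := by
  have hl0 := List.length_pos_of_ne_nil hw
  refine ⟨eq_per (h.1.ne_nil _ (Or.inr rfl)) ?_, not_tail_per hw (step_unb h.2 L) ?_⟩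
  · conv_lhs => rw [← pre_per w, h.1.sw_pre (Or.inl rfl)]
    rw [swW, if_pos rfl]
  · rw [step_length]; omega

/-- The swap fixes the sequences of small period which do not contain `w`. -/
lemma sw_fixes {w : Word n} {a b : A n} {L m : ℕ} (h : Markers w (step a b L) ∧ a ≠ b)
    (hm : 0 < m) {x : Seq n} (hx : sdrop m x = x) (hL : m < L + L)
    (hwx : ∀ k, ¬ Starts w (sdrop k x)) : sw w (step a b L) x = x := by
  refine sw_fixed ?_
  rintro k v (rfl | rfl)
  · exact hwx k
  · intro hs
    have := (step_unb h.2 L).length_le hm hx hs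
    rw [step_length] at this
    omega

/-! ### Test words fixed up to rotation -/

/-- Words consisting of `M` zeros followed by a word of length `ℓ ≤ M` which begins with `101`
and ends with `1`. -/
structure Test (M ℓ : ℕ) (γ : Word n) : Prop where
  len : γ.length = M + ℓ
  four : 4 ≤ ℓ
  le : ℓ ≤ M
  zero : ∀ m < M, γ.getD m default = 0
  one : γ.getD M default = 1
  zero' : γ.getD (M + 1) default = 0
  one' : γ.getD (M + 2) default = 1
  last : γ.getD (M + ℓ - 1) default = 1

lemma zero_ne_one_A : (0 : A n) ≠ 1 := by simp

lemma Test.ne_nil {M ℓ : ℕ} {γ : Word n} (h : Test M ℓ γ) : γ ≠ [] := fun e => by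
  have h1 := h.len
  have := h.four
  rw [e] at h1; simp at h1; omega

lemma Test.unb {M ℓ : ℕ} {γ : Word n} (h : Test M ℓ γ) : Unb γ := by
  intro s hs hp hsuf
  by_contra hne
  have hpos := List.length_pos_of_ne_nil hs
  have h1 := hp.length_le
  have h2 : s.length ≠ γ.length := fun e => hne (hp.eq_of_length e)
  have hl := h.len
  have h4 := h.four
  have hle := h.le
  have e1 := getD_of_prefix hp (m := s.length - 1) (by omega)
  rw [suffix_getD hsuf, show γ.length - s.length + (s.length - 1) = M + ℓ - 1 by omega,
    h.last] at e1
  have hM : M < s.length := by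
    by_contra! hc
    rw [h.zero _ (by omega)] at e1
    exact zero_ne_one_A e1
  have e2 := getD_of_prefix hp (m := s.length - ℓ) (by omega)
  rw [suffix_getD hsuf, show γ.length - s.length + (s.length - ℓ) = M by omega, h.one,
    h.zero _ (by omega)] at e2
  exact zero_ne_one_A e2

lemma Test.not_infix {M ℓ : ℕ} {γ : Word n} (h : Test M ℓ γ) (b : A n) (L : ℕ) :
    ¬ γ <:+: step 0 b L := by
  intro hi
  obtain ⟨k, hk, hg⟩ := infix_getD hi
  have hl := h.len
  have h4 := h.four
  rw [step_length] at hk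
  have e1 := hg M (by omega)
  have e2 := hg (M + 1) (by omega)
  rw [h.one] at e1
  rw [h.zero'] at e2
  rcases lt_or_ge (k + M) L with hc | hc
  · rw [step_lt _ _ hc] at e1
    exact zero_ne_one_A e1.symm
  · rw [step_ge _ _ hc (by omega)] at e1
    rw [step_ge _ _ (by omega) (by omega)] at e2
    exact zero_ne_one_A (e2.trans e1.symm)

/-- A map on sequences which respects tail equivalence, is injective on its classes, preserves
periodic classes and commutes with all swaps fixes the classes of all test words. If the class
`z'` of the image does not contain the test word `γ`, then the swap of `γ` with a long `0^L 1^L`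
moves `per γ` but fixes `z'`. If it does and `z'` is not
the class of `per γ`, then its unbordered period `δ` is longer than `γ`, and
the swap of `δ` with some `a^L b^L` fixes `per γ` but moves `z'`. -/
lemma test_fixed {F : Seq n → Seq n}
    (hcomm : ∀ w₁ w₂ : Word n, Markers w₁ w₂ → ∀ x, TailEq (sw w₁ w₂ (F x)) (F (sw w₁ w₂ x)))
    (hinj : ∀ x y, TailEq (F x) (F y) → TailEq x y)
    (hper : ∀ γ : Word n, γ ≠ [] → ∃ η, η ≠ [] ∧ TailEq (F (per γ)) (per η))
    {M ℓ : ℕ} {γ : Word n} (h : Test M ℓ γ) : TailEq (F (per γ)) (per γ) := by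
  by_contra hne
  have hγ := h.ne_nil
  have hl := h.len
  have h4 := h.four
  have hle := h.le
  obtain ⟨η, hη, t1⟩ := hper γ hγ
  obtain ⟨δ, hδ, hu, t2⟩ := exists_unb hη
  have hz := t1.trans t2
  have hδl := List.length_pos_of_ne_nil hδ
  by_cases hf : ∃ k, Starts γ (sdrop k (per δ))
  · obtain ⟨k, hk⟩ := hf
    rcases (h.unb.length_le hδl (sdrop_per δ) hk).eq_or_lt with he | hlt
    · refine hne (hz.trans ⟨k, 0, ?_⟩)
      have e : sdrop γ.length (sdrop k (per δ)) = sdrop k (per δ) := by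
        rw [sdrop_comm, he, sdrop_per]
      rw [eq_per_stake (by omega) e, starts_iff.1 hk, sdrop_zero]
    · have hinf : ¬ δ <:+: step (δ.getD 0 default) (δ.getD (δ.length - 1) default) δ.length := by
        intro hi
        obtain ⟨k₀, hk₀, hg⟩ := infix_getD hi
        rw [step_length] at hk₀
        have hne01 := zero_ne_one_A (n := n)
        have hval : ∀ j < γ.length, per δ (k + j) = γ.getD j default := by
          intro j hj
          obtain ⟨w, hw⟩ := hk
          have := congrFun hw j
          rw [pre_lt _ _ hj] at this
          exact this
        -- a change of letter in `per δ` happens at one of two residues modulo `δ.length`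
        have key : ∀ t, per δ t ≠ per δ (t + 1) →
            (t % δ.length + 1 < δ.length ∧ (t + 1) % δ.length = t % δ.length + 1 ∧
              k₀ + t % δ.length + 1 = δ.length) ∨
            (t % δ.length + 1 = δ.length ∧ (t + 1) % δ.length = 0) := by
          intro t ht
          have hlt' := Nat.mod_lt t hδl
          rcases Nat.lt_or_ge (t % δ.length + 1) δ.length with hc | hc
          · left
            have e : (t + 1) % δ.length = t % δ.length + 1 := by
              rw [Nat.add_mod, Nat.mod_eq_of_lt (a := 1) (by omega), Nat.mod_eq_of_lt hc]
            refine ⟨hc, e, ?_⟩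
            by_contra hcc
            apply ht
            rw [per, per, e, hg _ hlt', hg _ hc]
            rcases lt_or_ge (k₀ + t % δ.length) δ.length with h1 | h1
            · rw [step_lt _ _ h1, step_lt _ _ (by omega)]
            · rw [step_ge _ _ h1 (by omega), step_ge _ _ (by omega) (by omega)]
          · right
            have e : t % δ.length + 1 = δ.length := by omega
            refine ⟨e, ?_⟩
            rw [Nat.add_mod, Nat.mod_eq_of_lt (a := 1) (by omega), e, Nat.mod_self]
        have c0 := key (k + (M - 1)) (by
          rw [hval _ (by omega), show k + (M - 1) + 1 = k + M by omega, hval _ (by omega),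
            h.one, h.zero _ (by omega)]
          exact hne01)
        have c1 := key (k + (M - 1) + 1) (by
          rw [show k + (M - 1) + 1 = k + M by omega, hval _ (by omega),
            show k + M + 1 = k + (M + 1) by omega, hval _ (by omega), h.one, h.zero']
          exact hne01.symm)
        have c2 := key (k + (M - 1) + 1 + 1) (by
          rw [show k + (M - 1) + 1 + 1 = k + (M + 1) by omega, hval _ (by omega),
            show k + (M + 1) + 1 = k + (M + 2) by omega, hval _ (by omega), h.one', h.zero']
          exact hne01)
        omega
      have hm := unb_markers hu (by omega) rfl rfl le_rfl hinf
      have f1 := sw_fixes hm (by omega) (sdrop_per γ) (by omega) (fun k hk => by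
        have := hu.length_le (by omega) (sdrop_per γ) hk
        omega)
      obtain ⟨f2, f3⟩ := sw_moves hδ le_rfl hm
      refine f3 ?_
      rw [← f2]
      have h1 := hcomm _ _ hm.1 (per γ)
      rw [f1] at h1
      exact ((sw_tail hm.1 hz.symm).trans h1).trans hz
  · have hm := unb_markers (b := 1) (L := γ.length + δ.length) h.unb (by omega)
      (h.zero 0 (by omega))
      (by rw [hl]; exact h.last) (by omega) (h.not_infix _ _)
    have f1 := sw_fixes hm hδl (sdrop_per δ) (by omega) (fun k hk => hf ⟨k, hk⟩)
    obtain ⟨f2, f3⟩ := sw_moves hγ (by omega) hm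
    refine f3 ?_
    rw [← f2]
    apply hinj
    have h1 := sw_tail hm.1 hz
    rw [f1] at h1
    exact ((hcomm _ _ hm.1 (per γ)).symm.trans h1).trans hz.symm

/-! ### Locating the block of nonzero letters -/

lemma Test.per_eq {M ℓ : ℕ} {γ : Word n} (h : Test M ℓ γ) (t : ℕ) :
    per γ t = γ.getD (t % (M + ℓ)) default := by rw [per, h.len]

lemma Test.mod_ge {M ℓ : ℕ} {γ : Word n} (h : Test M ℓ γ) {t : ℕ} (ht : per γ t ≠ 0) :
    M ≤ t % (M + ℓ) := by
  by_contra! hc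
  exact ht ((h.per_eq t).trans (h.zero _ hc))

lemma mod_add_of_lt {K t D : ℕ} (h : t % K + D < K) : (t + D) % K = t % K + D := by
  have hK : D < K := by omega
  rw [Nat.add_mod, Nat.mod_eq_of_lt hK, Nat.mod_eq_of_lt h]

lemma mod_add_of_ge {K t D : ℕ} (h : K ≤ t % K + D) (h' : D < K) :
    (t + D) % K = t % K + D - K := by
  have hK := Nat.mod_lt t (y := K) (by omega)
  rw [Nat.add_mod, Nat.mod_eq_of_lt h', Nat.mod_eq_sub_mod h, Nat.mod_eq_of_lt (by omega)]

lemma Test.gap {M ℓ : ℕ} {γ : Word n} (h : Test M ℓ γ) {t D : ℕ} (ht : per γ t ≠ 0)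
    (h1 : ℓ ≤ D) (h2 : D ≤ M) : per γ (t + D) = 0 := by
  have hm := h.mod_ge ht
  have h4 := h.four
  have hlt := Nat.mod_lt t (y := M + ℓ) (by omega)
  rw [h.per_eq, mod_add_of_ge (by omega) (by omega), h.zero _ (by omega)]

lemma per_eq_pre_flatten (u : Word n) (j : ℕ) :
    per u = pre (List.replicate j u).flatten (per u) := by
  induction j with
  | zero => rfl
  | succ j ih =>
    rw [List.replicate_succ, List.flatten_cons, pre_append, ← ih, pre_per]

/-- If for all large `M` there is a periodic sequence `V u^(M-k) V u^(M-k) …` in the tail class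
of `per (0^M Y)`, then `u` consists of zeros, and `V` is `Y` up to zeros at both ends. -/
lemma locate {V u Y : Word n} (hu : u ≠ []) {k : ℕ}
    (hγ : ∀ M, Y.length ≤ M → Test M Y.length (List.replicate M 0 ++ Y))
    (hx : ∀ M, k + Y.length ≤ M → ∃ x, x = pre V (pre (List.replicate (M - k) u).flatten x) ∧
      TailEq x (per (List.replicate M 0 ++ Y))) :
    (∀ s < u.length, u.getD s default = 0) ∧
      ∃ e, pre V (fun _ => 0) = pre (List.replicate e 0) (pre Y fun _ => (0 : A n)) := by
  have hul := List.length_pos_of_ne_nil hu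
  -- two tail equivalent periodic sequences are shifts of one another
  have hx' : ∀ M, k + Y.length ≤ M → k < M →
      ∃ x, x = pre V (pre (List.replicate (M - k) u).flatten x) ∧
      (∃ c, x = sdrop c (per (List.replicate M 0 ++ Y))) ∧ ∃ c, per (List.replicate M 0 ++ Y) =
        sdrop c x := by
    intro M hM hkM
    obtain ⟨x, hx1, i, j, hij⟩ := hx M hM
    refine ⟨x, hx1, ?_, ?_⟩
    · have hne : V ++ (List.replicate (M - k) u).flatten ≠ [] := fun e => by
        have := congrArg List.length e
        simp at this
        rcases this.2 with h | h
        · omega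
        · exact hu h
      rw [← pre_append] at hx1
      have hd : sdrop (V ++ (List.replicate (M - k) u).flatten).length x = x := by
        conv_lhs => rw [hx1]
        rw [sdrop_pre]
      have hpos := List.length_pos_of_ne_nil hne
      generalize (V ++ (List.replicate (M - k) u).flatten).length = P at *
      refine ⟨j + (i * P - i), ?_⟩
      rw [← sdrop_sdrop, ← hij, sdrop_sdrop,
        Nat.add_sub_cancel' (Nat.le_mul_of_pos_right i hpos), sdrop_mul hd]
    · have hT := hγ M (by omega)
      have hd := sdrop_per (List.replicate M 0 ++ Y)
      have hpos := List.length_pos_of_ne_nil hT.ne_nil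
      generalize (List.replicate M 0 ++ Y).length = P at *
      refine ⟨i + (j * P - j), ?_⟩
      rw [← sdrop_sdrop, hij, sdrop_sdrop,
        Nat.add_sub_cancel' (Nat.le_mul_of_pos_right j hpos), sdrop_mul hd]
  have hlen : ∀ j, (List.replicate j u).flatten.length = j * u.length := fun j => by simp
  have hu0 : ∀ s < u.length, u.getD s default = 0 := by
    intro s hs
    by_contra hne
    set ℓ := Y.length with hℓ
    obtain ⟨x, hx1, ⟨c, hc⟩, -⟩ := hx' (k + ℓ * u.length + u.length + ℓ) (by omega) (by omega)
    have hT := hγ (k + ℓ * u.length + u.length + ℓ) (by omega)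
    generalize hm : k + ℓ * u.length + u.length + ℓ - k = m at *
    have hmu : m ≤ m * u.length := Nat.le_mul_of_pos_right m hul
    have hlu : ℓ ≤ ℓ * u.length := Nat.le_mul_of_pos_right ℓ hul
    have hy : ∀ t < m * u.length, per (List.replicate (k + ℓ * u.length + u.length + ℓ) 0 ++ Y)
        (c + V.length + t) = per u t := by
      intro t ht
      have e1 := congrFun hc (V.length + t)
      rw [hx1, pre_add, pre_lt _ _ (by rw [hlen]; exact ht)] at e1
      rw [add_assoc c]
      refine e1.symm.trans ?_
      conv_rhs => rw [per_eq_pre_flatten u m]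
      rw [pre_lt _ _ (by rw [hlen]; exact ht)]
    have e1 : per u s ≠ 0 := by rw [per, Nat.mod_eq_of_lt hs]; exact hne
    have e2 : per u (s + ℓ * u.length) ≠ 0 := by
      rw [per, Nat.add_mul_mod_self_right, Nat.mod_eq_of_lt hs]; exact hne
    rw [← hy _ (by omega)] at e1 e2
    rw [← add_assoc] at e2
    exact e2 (hT.gap e1 hlu (by omega))
  refine ⟨hu0, ?_⟩
  have hU0 : ∀ j t, (List.replicate j u).flatten.getD t default = 0 := by
    intro j t
    rcases lt_or_ge t (List.replicate j u).flatten.length with h | h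
    · rw [← pre_lt _ (per u) h, ← per_eq_pre_flatten, per]
      exact hu0 _ (Nat.mod_lt _ hul)
    · rw [List.getD_eq_default _ _ h]; rfl
  -- `V` has a nonzero letter
  obtain ⟨e, he, hne, hmin⟩ : ∃ e < V.length, V.getD e default ≠ 0 ∧
      ∀ i < e, V.getD i default = 0 := by
    classical
    have hex : ∃ e, V.getD e default ≠ 0 := by
      by_contra! hV
      obtain ⟨x, hx1, -, c, hc⟩ := hx' (k + Y.length + 1) (by omega) (by omega)
      have hT := hγ (k + Y.length + 1) (by omega)
      have hm : k + Y.length + 1 - k = Y.length + 1 := by omega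
      rw [hm] at hx1
      generalize Y.length + 1 = m at *
      have hl0 : 0 < (List.replicate m u).flatten.length := by
        rw [hlen]; exact Nat.mul_pos (by omega) hul
      have h0 : ∀ N, ∀ t < N, x t = 0 := by
        intro N
        induction N with
        | zero => simp
        | succ N ih =>
          intro t ht
          rw [hx1]
          rcases lt_or_ge t V.length with h | h
          · rw [pre_lt _ _ h, hV]
          · rw [pre_ge _ _ h]
            rcases lt_or_ge (t - V.length) (List.replicate m u).flatten.length with h' | h'
            · rw [pre_lt _ _ h', hU0]
            · rw [pre_ge _ _ h']
              exact ih _ (by omega)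
      have := congrFun hc (k + Y.length + 1)
      have h4 := hT.four
      rw [hT.per_eq, Nat.mod_eq_of_lt (by omega), hT.one] at this
      exact zero_ne_one_A ((h0 _ _ (Nat.lt_succ_self _)).symm.trans this.symm)
    refine ⟨Nat.find hex, ?_, Nat.find_spec hex, fun i hi => not_not.1 (Nat.find_min hex hi)⟩
    by_contra! hc
    exact Nat.find_spec hex (by rw [List.getD_eq_default _ _ hc]; rfl)
  refine ⟨e, funext fun p => ?_⟩
  rcases lt_or_ge p e with hp | hp
  · rw [pre_lt _ _ (by omega), hmin _ hp, pre_lt _ _ (by simpa using hp)]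
    simp [List.getD, hp]
  obtain ⟨t, rfl⟩ := Nat.exists_eq_add_of_le hp
  have hr : pre (List.replicate e 0) (pre Y fun _ => (0 : A n)) (e + t)
      = pre Y (fun _ => (0 : A n)) t := by
    have := pre_add (List.replicate e (0 : A n)) (pre Y fun _ => (0 : A n)) t
    rwa [List.length_replicate] at this
  rw [hr]
  -- choose `M` so large that the position `e + t` lies in front of the second `V`
  obtain ⟨M, hM⟩ : ∃ M, M = k + Y.length + 1 + e + t := ⟨_, rfl⟩
  obtain ⟨x, hx1, ⟨c, hc⟩, -⟩ := hx' M (by omega) (by omega)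
  have hT := hγ M (by omega)
  have h4 := hT.four
  generalize hm : M - k = m at *
  have hmu : m ≤ m * u.length := Nat.le_mul_of_pos_right m hul
  generalize hz : per (List.replicate M 0 ++ Y) = z at *
  -- `z = … u^m V u^m …`, where the last `V` starts at `B`
  set B := c + V.length + m * u.length with hB
  have z1 : ∀ i < m * u.length, z (c + V.length + i) = 0 := by
    intro i hi
    have e1 := congrFun hc (V.length + i)
    rw [hx1, pre_add, pre_lt _ _ (by rw [hlen]; exact hi), hU0] at e1
    rw [add_assoc]
    exact e1.symm
  have z2 : ∀ i, z (B + i) = x i := by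
    intro i
    have e1 := congrFun hc (V.length + (m * u.length + i))
    rw [hx1, pre_add, ← hlen m, pre_add, hlen] at e1
    rw [hB, add_assoc, add_assoc]
    exact e1.symm
  have x1 : ∀ i < V.length + m, x i = pre V (fun _ => 0) i := by
    intro i hi
    rw [hx1]
    rcases lt_or_ge i V.length with h | h
    · rw [pre_lt _ _ h, pre_lt _ _ h]
    · rw [pre_ge _ _ h, pre_ge _ _ h, pre_lt _ _ (by rw [hlen]; omega), hU0]
  have z3 : ∀ i, i < m → 0 < i → z (B + e - i) = 0 := by
    intro i hi hi0
    rcases le_or_gt i e with h | h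
    · rw [show B + e - i = B + (e - i) by omega, z2, x1 _ (by omega), pre_lt _ _ (by omega)]
      exact hmin _ (by omega)
    · rw [show B + e - i = c + V.length + (m * u.length + e - i) by omega]
      exact z1 _ (by omega)
  have z4 : z (B + e) ≠ 0 := by
    rw [z2, x1 _ (by omega), pre_lt _ _ he]; exact hne
  subst hz
  have hge := hT.mod_ge z4
  have hlt := Nat.mod_lt (B + e) (y := M + Y.length) (by omega)
  have hmod : (B + e) % (M + Y.length) = M := by
    by_contra hcon
    have h5 := z3 ((B + e) % (M + Y.length) - M) (by omega) (by omega)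
    have hle := Nat.mod_le (B + e) (M + Y.length)
    have h6 : (B + e - ((B + e) % (M + Y.length) - M)) % (M + Y.length) = M := by
      have := Nat.div_add_mod (B + e) (M + Y.length)
      rw [show B + e - ((B + e) % (M + Y.length) - M)
        = M + (M + Y.length) * ((B + e) / (M + Y.length)) by omega, Nat.add_mul_mod_self_left,
        Nat.mod_eq_of_lt (by omega)]
    rw [hT.per_eq, h6, hT.one] at h5
    exact zero_ne_one_A h5.symm
  rw [← x1 _ (by omega), ← z2, ← add_assoc]
  rcases lt_or_ge t Y.length with ht | ht
  · rw [hT.per_eq, mod_add_of_lt (by omega), hmod, pre_lt _ _ ht]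
    simp only [List.getD]
    rw [List.getElem?_append_right (by simp), List.length_replicate, Nat.add_sub_cancel_left]
  · rw [hT.gap z4 ht (by omega), pre_ge _ _ ht]

/-! ### From test words to the identity -/

/-- The words `1 0 1 W 1`. -/
def block (W : Word n) : Word n := 1 :: 0 :: 1 :: (W ++ [1])

lemma block_length (W : Word n) : (block W).length = W.length + 4 := by simp [block]

lemma test_block (W : Word n) {M : ℕ} (hM : (block W).length ≤ M) :
    Test M (block W).length (List.replicate M 0 ++ block W) := by
  have hr : ∀ i, (List.replicate M 0 ++ block W).getD (M + i) default
      = (block W).getD i default := fun i => by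
    simp only [List.getD]
    rw [List.getElem?_append_right (by simp), List.length_replicate, Nat.add_sub_cancel_left]
  have hl := block_length W
  refine ⟨by simp, by omega, hM, fun m hm => ?_, hr 0, hr 1, hr 2, ?_⟩
  · rw [← pre_lt _ (fun _ => 0) (by simp; omega), pre_append, pre_lt _ _ (by simpa using hm)]
    simp [List.getD, hm]
  · rw [Nat.add_sub_assoc (by omega), hr, hl]
    simp [block, List.getD]

lemma exists_loop {T : Transducer n} (sT : StronglySync T) {γ : Word n} (hγ : γ ≠ []) :
    ∃ p, dsts T γ p = p := by
  obtain ⟨k, hk⟩ := sT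
  have q := Classical.choice T.ne
  have hl := List.length_pos_of_ne_nil hγ
  have hlen : k ≤ (List.replicate k γ).flatten.length := by
    simpa using Nat.le_mul_of_pos_right k hl
  refine ⟨dsts T (List.replicate k γ).flatten q, ?_⟩
  have e : (List.replicate k γ).flatten ++ γ = γ ++ (List.replicate k γ).flatten := by
    rw [← List.flatten_cons, ← List.replicate_succ, List.replicate_succ', List.flatten_append]
    simp
  rw [← dsts_append, e, dsts_append]
  exact hk.mono hlen _ rfl _ _

lemma hmap_loop {T : Transducer n} (hT : CircuitsNonempty T) {γ : Word n} (hγ : γ ≠ [])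
    {p : T.Q} (hp : dsts T γ p = p) : hmap T p (per γ) = per (outs T γ p) := by
  refine eq_per (hT p γ hγ hp) ?_
  conv_lhs => rw [← pre_per, hmap_pre hT, hp]

/-- A central element fixes the tail classes of the periodic test sequences. -/
lemma central_fixes {r : ℕ} {T : Transducer n} (hT : OnMem T)
    (hcentral : ∀ U : Transducer n, OnMem U →
      (r : ZMod (n + 1)) * sigT U = (r : ZMod (n + 1)) →
      OmegaEq (mulT T U) (mulT U T)) (q : T.Q) {M ℓ : ℕ} {γ : Word n} (h : Test M ℓ γ) :
    TailEq (hmap T q (per γ)) (per γ) := by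
  have mT := hT.1.minimal
  refine test_fixed (fun w₁ w₂ hm x => ?_) (fun x y hxy => ?_) (fun γ hγ => ?_) h
  · obtain ⟨U, hU, c, hc⟩ := exists_swap hm
    have hs : sigT U = 1 := sigT_eq_one hU.1 (c := c) (by
      rw [hc]; exact fun y => ⟨_, hm.sw_sw y⟩)
    have mU := hU.1.minimal
    rw [← hc]
    exact tail_commute mT.1 mU.1 mT.2.1 mU.2.1 (hcentral U hU (by rw [hs, mul_one])) q c x
  · obtain ⟨V, hV, h1, -⟩ := hT.2
    have mV := hV.minimal
    exact tail_injective mT.1 mV.1 mT.2.1 mV.2.1 h1 q hxy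
  · obtain ⟨p, hp⟩ := exists_loop mT.2.1 hγ
    refine ⟨outs T γ p, mT.1.1 p γ hγ hp, ?_⟩
    rw [← hmap_loop mT.1.1 hγ hp]
    exact hmap_tail_state mT.1.1 mT.2.1 _ _ _

/-- If the tail classes of the test sequences are fixed, then the state at the loop labelled
`0` shifts each sequence `1 0 1 W 1 0 0 0 …`. -/
lemma shifts_blocks {T : Transducer n} (hT : Good T) (sT : StronglySync T)
    (hfix : ∀ (q : T.Q) (M ℓ : ℕ) (γ : Word n), Test M ℓ γ → TailEq (hmap T q (per γ)) (per γ)) :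
    ∃ q, hmap T q (fun _ => 0) = (fun _ => 0) ∧ ∀ W : Word n, ∃ e,
      hmap T q (pre (block W) fun _ => 0)
        = pre (List.replicate e 0) (pre (block W) fun _ => 0) := by
  have sT' := sT
  obtain ⟨k, hk⟩ := sT
  obtain ⟨q, hq⟩ : ∃ q, T.tr 0 q = q := exists_loop sT' (γ := [0]) (by simp)
  have hu : T.out 0 q ≠ [] := by
    have := hT.1 q [0] (by simp) hq
    simpa [outs] using this
  set u := T.out 0 q with hu'
  have hpow : ∀ j x, hmap T q (pre (List.replicate j 0) x)
      = pre (List.replicate j u).flatten (hmap T q x) := by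
    intro j x
    induction j with
    | zero => rfl
    | succ j ih =>
      rw [List.replicate_succ, pre_cons, hmap_scons hT.1, hq, ih, List.replicate_succ,
        List.flatten_cons, pre_append]
  have hsync : ∀ p, dsts T (List.replicate k 0) p = q := by
    intro p
    have : ∀ j, dsts T (List.replicate j 0) q = q := by
      intro j
      induction j with
      | zero => rfl
      | succ j ih => rw [List.replicate_succ, dsts, hq, ih]
    rw [hk _ (by simp) p q, this]
  have hV : ∀ (Y : Word n) x, hmap T q (pre (Y ++ List.replicate k 0) x)
      = pre (outs T (Y ++ List.replicate k 0) q) (hmap T q x) := by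
    intro Y x
    rw [hmap_pre hT.1, dsts_append, hsync]
  have hloc := fun W : Word n => locate (V := outs T (block W ++ List.replicate k 0) q) (u := u)
    (Y := block W) hu (k := k) (fun M hM => test_block W hM) (by
      intro M hM
      have hl := block_length W
      refine ⟨hmap T q (per (block W ++ List.replicate M 0)), ?_, ?_⟩
      · rw [← hpow, ← hV, ← pre_append, List.append_assoc, List.replicate_append_replicate,
          Nat.add_sub_cancel' (by omega), pre_per]
      · have hne : List.replicate M 0 ++ block W ≠ [] := by simp [block]
        have e : pre (List.replicate M 0) (per (block W ++ List.replicate M 0))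
            = per (List.replicate M 0 ++ block W) := by
          refine eq_per hne ?_
          conv_lhs => rw [← pre_per, pre_append]
          rw [pre_append]
        have ht : TailEq (per (block W ++ List.replicate M 0))
            (per (List.replicate M 0 ++ block W)) := by
          rw [← e]; exact (tailEq_pre _ _).symm
        exact (hmap_tail hT.1 sT' q q ht).trans (hfix q M _ _ (test_block W (by omega))))
  have hz : hmap T q (fun _ => 0) = (fun _ => 0) := by
    have h0 : (fun _ => 0 : Seq n) = per [0] := eq_per (by simp) (by
      funext m; cases m <;> rfl)
    conv_lhs => rw [h0]
    rw [hmap_loop hT.1 (by simp) (show dsts T [0] q = q from hq)]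
    have : outs T [0] q = u := by simp [outs, hu']
    rw [this]
    funext m
    exact (hloc []).1 _ (Nat.mod_lt _ (List.length_pos_of_ne_nil hu))
  refine ⟨q, hz, fun W => ?_⟩
  obtain ⟨e, he⟩ := (hloc W).2
  refine ⟨e, ?_⟩
  rw [← he]
  have e0 : pre (List.replicate k 0) (fun _ => 0 : Seq n) = fun _ => 0 := by
    funext m
    rcases lt_or_ge m (List.replicate k (0 : A n)).length with h | h
    · rw [pre_lt _ _ h]; simp [List.getD]
    · rw [pre_ge _ _ h]
  have := hV (block W) fun _ => 0
  rw [pre_append, e0, hz] at this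
  exact this

lemma pre_replicate_zero (e : ℕ) (W : Word n) (x : Seq n) :
    (∀ i < e, pre (List.replicate e 0) (pre (block W) x) i = 0) ∧
      pre (List.replicate e 0) (pre (block W) x) e = 1 := by
  constructor
  · intro i hi
    rw [pre_lt _ _ (by simpa using hi)]
    simp [List.getD, hi]
  · have := pre_add (List.replicate e (0 : A n)) (pre (block W) x) 0
    rw [List.length_replicate] at this
    exact this

/-- A minimal transducer one of whose states shifts the sequences `1 0 1 W 1 0 0 0 …` is
trivial. -/
lemma trivial_of_shifts {T : Transducer n} (mT : Minimal T) {q : T.Q}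
    (hz : hmap T q (fun _ => 0) = (fun _ => 0))
    (hs : ∀ W : Word n, ∃ e, hmap T q (pre (block W) fun _ => 0)
        = pre (List.replicate e 0) (pre (block W) fun _ => 0)) : OmegaEq T oneT := by
  obtain ⟨hT, sT, cT, nT, wT⟩ := mT
  classical
  -- the amount of the shift is constant near `1 0 1 1 1 1 …`
  let x₀ : Seq n := pre [1, 0, 1] fun _ => 1
  have hex : ∃ e, hmap T q x₀ e ≠ 0 := by
    by_contra! hc
    have : hmap T q x₀ = hmap T q fun _ => 0 := by rw [hz]; exact funext hc
    have := congrFun (hT.2 q this) 0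
    exact zero_ne_one_A (n := n) this.symm
  obtain ⟨e, hne, hmin⟩ : ∃ e, hmap T q x₀ e ≠ 0 ∧ ∀ i < e, hmap T q x₀ i = 0 :=
    ⟨Nat.find hex, Nat.find_spec hex, fun i hi => not_not.1 (Nat.find_min hex hi)⟩
  obtain ⟨K, hK⟩ := hmap_local hT.1 q e
  let ν : Word n := 1 :: 0 :: 1 :: List.replicate K 1
  have hνl : ν.length = K + 3 := by simp [ν]
  have hν : ∀ x, stake K (pre ν x) = stake K x₀ := by
    intro x
    rw [stake_eq_iff]
    intro t ht
    have e1 : x₀ = pre ν fun _ => 1 := by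
      show pre [1, 0, 1] _ = pre ([1, 0, 1] ++ List.replicate K 1) _
      rw [pre_append]
      congr 1
      funext m
      rcases lt_or_ge m (List.replicate K (1 : A n)).length with h | h
      · rw [pre_lt _ _ h]; simp at h; simp [List.getD, h]
      · rw [pre_ge _ _ h]
    rw [e1, pre_lt _ _ (by omega), pre_lt _ _ (by omega)]
  have h1 : ∀ W : Word n, hmap T q (pre (ν ++ (W ++ [1])) fun _ => 0)
      = pre (List.replicate e 0) (pre (ν ++ (W ++ [1])) fun _ => 0) := by
    intro W
    have hb : ν ++ (W ++ [1]) = block (List.replicate K 1 ++ W) := by simp [ν, block]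
    obtain ⟨e', he'⟩ := hs (List.replicate K 1 ++ W)
    have hag : ∀ i ≤ e, hmap T q (pre (ν ++ (W ++ [1])) fun _ => 0) i = hmap T q x₀ i :=
      hK _ _ (by rw [pre_append]; exact hν _)
    rw [hb] at hag ⊢
    obtain ⟨p1, p2⟩ := pre_replicate_zero e' (List.replicate K 1 ++ W) (fun _ => 0)
    rw [← he'] at p1 p2
    rcases lt_trichotomy e e' with h | h | h
    · have := p1 e h
      rw [hag e le_rfl] at this
      exact absurd this hne
    · rw [h]; exact he'
    · rw [hag e' h.le, hmin e' h] at p2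
      exact absurd p2 zero_ne_one_A
  have h2 : ∀ x, hmap T q (pre ν x) = pre (List.replicate e 0) (pre ν x) := by
    intro x
    funext m
    obtain ⟨K', hK'⟩ := hmap_local hT.1 q m
    let x' : Seq n := pre (stake (K' + m + 1) x ++ [1]) fun _ => 0
    have hx' : ∀ t < K' + m + 1, x' t = x t := by
      intro t ht
      have : x' = pre (stake (K' + m + 1) x) (pre [1] fun _ => 0) := pre_append _ _ _
      rw [this, pre_lt _ _ (by simpa using ht), stake_getD _ _ ht]
    have hν' : ∀ t < K' + m + 1, pre ν x' t = pre ν x t := by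
      intro t ht
      rcases lt_or_ge t ν.length with h | h
      · rw [pre_lt _ _ h, pre_lt _ _ h]
      · rw [pre_ge _ _ h, pre_ge _ _ h, hx' _ (by omega)]
    rw [hK' (pre ν x) (pre ν x') (stake_eq_iff.2 fun t ht => (hν' t (by omega)).symm) m le_rfl]
    have := congrFun (h1 (stake (K' + m + 1) x)) m
    rw [pre_append] at this
    refine this.trans ?_
    rcases lt_or_ge m (List.replicate e (0 : A n)).length with h | h
    · rw [pre_lt _ _ h, pre_lt _ _ h]
    · rw [pre_ge _ _ h, pre_ge _ _ h]
      exact hν' _ (by omega)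
  -- hence the state reached by reading `ν` induces the identity
  set p := dsts T ν q with hp
  have hid : hmap T p = id := by
    have h3 : ∀ x, pre (List.replicate e 0 ++ ν) x = pre (outs T ν q) (hmap T p x) := by
      intro x
      rw [pre_append, ← h2, hmap_pre hT.1]
    exact funext (eq_id_of_pre h3 (nT p)).2
  have htr : ∀ a, T.tr a p = p := by
    intro a
    apply wT
    have h3 : ∀ x, pre [a] x = pre (T.out a p) (hmap T (T.tr a p) x) := by
      intro x
      rw [← hmap_scons hT.1, hid]; rfl
    rw [hid]
    exact funext (eq_id_of_pre h3 (nT _)).2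
  refine omegaEq_oneT wT fun s => ?_
  obtain ⟨w, hw⟩ := (cT s).exists_word p
  have : ∀ w, dsts T w p = p := by
    intro w
    induction w with
    | nil => rfl
    | cons a w ih => rw [dsts, htr, ih]
  rw [← hw, this, hid]

/-- For every `1 ≤ r ≤ n - 1`, the group
`O_{n,r} = {T ∈ O_n : r ⬝ sig T = r in ℤ/(n-1)}` has trivial centre; in particular
`O_n = O_{n, n-1}` is centreless.  (For our alphabet of size `n + 2`, `r` ranges over
`1 ≤ r ≤ n + 1` and the modulus is `n + 1`.)  Stated: every element of `O_{n,r}`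
commuting with all elements of `O_{n,r}` is the identity. -/
theorem Onr_centreless (n : ℕ) (r : ℕ) (hr1 : 1 ≤ r) (hr2 : r ≤ n + 1)
    (T : Transducer n) (hT : OnMem T)
    (hTr : (r : ZMod (n + 1)) * sigT T = (r : ZMod (n + 1)))
    (hcentral : ∀ U : Transducer n, OnMem U →
      (r : ZMod (n + 1)) * sigT U = (r : ZMod (n + 1)) →
      OmegaEq (mulT T U) (mulT U T)) :
    OmegaEq T oneT := by
  have mT := hT.1.minimal
  obtain ⟨q, hz, hs⟩ := shifts_blocks mT.1 mT.2.1
    fun q _ _ _ h => central_fixes hT hcentral q h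
  exact trivial_of_shifts mT hz hs

end ShiftPaper
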